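/- Suppose R := liminf_{i→∞} a_i is finite (so R ≥ 2). Then ρ(α) ≥ M(α,γ_*), and moreover: if R = 2 then M(α,γ_*) ≥ 1/(2(√13+10)); if R = 3 then M(α,γ_*) ≥ (1/4)·(1 − 2/(1+√3))·(1 − (1/4)(1 + θ_1²/(1−θ_1)))/(1 + (1/4)(θ_1 − 1/(1+√3))), where θ_1 = (√13−3)/2 (this value is 1/20.487…); if R ≥ 4 is even then M(α,γ_*) ≥ (1/4)(1 − 3/R + 4/R² − 7/R³); if R ≥ 5 is odd then M(α,γ_*) ≥ (1/4)(1 − 3/R + 3/R² − 6/R³). -/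

import Mathlib

open Filter Finset

attribute [local instance] Classical.propDecidable

/-- Distance from `x` to the nearest integer, `‖x‖`. -/
noncomputable def nint (x : ℝ) : ℝ := |x - round x|

/-- The two-sided inhomogeneous approximation constant
`M(α,γ) = liminf_{|n|→∞} |n|·‖nα-γ‖`. -/
noncomputable def Mval (α γ : ℝ) : ℝ :=
  Filter.liminf (fun n : ℤ => (|n| : ℝ) * nint (n * α - γ)) Filter.cofinite

/-- `ρ(α) = sup { M(α,γ) : γ ∉ ℤ + αℤ }`. -/
noncomputable def rho (α : ℝ) : ℝ :=
  sSup {m : ℝ | ∃ γ : ℝ, (¬∃ p q : ℤ, γ = (p : ℝ) + (q : ℝ) * α) ∧ m = Mval α γ}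

/-- The tails `α_i` of the nearest integer continued fraction expansion of `α`. -/
noncomputable def nicfT (α : ℝ) : ℕ → ℝ
  | 0 => α
  | i + 1 =>
    if Int.fract (nicfT α i)⁻¹ ≤ 1 / 2 then Int.fract (nicfT α i)⁻¹
    else 1 - Int.fract (nicfT α i)⁻¹

/-- The partial quotients `a_i` (meaningful for `i ≥ 1`) of the NICF expansion. -/
noncomputable def nicfA (α : ℝ) : ℕ → ℤ
  | 0 => 0
  | i + 1 => if Int.fract (nicfT α i)⁻¹ ≤ 1 / 2 then ⌊(nicfT α i)⁻¹⌋ else ⌈(nicfT α i)⁻¹⌉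

/-- The signs `ε_i` of the NICF expansion (`ε_1 = 1`). -/
noncomputable def nicfE (α : ℝ) : ℕ → ℤ
  | 0 => 1
  | 1 => 1
  | i + 2 => if Int.fract (nicfT α i)⁻¹ ≤ 1 / 2 then 1 else -1

/-- `nicfD α n = D_{n-1} = α_0 α_1 ⋯ α_{n-1}` (so `nicfD α 0 = 1`, `nicfD α 1 = α`). -/
noncomputable def nicfD (α : ℝ) (n : ℕ) : ℝ := ∏ j ∈ Finset.range n, nicfT α j

/-- The number of indices `1 ≤ k ≤ i` with `a_k` odd. -/
noncomputable def oddIdx (α : ℝ) (i : ℕ) : ℕ :=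
  ((Finset.Icc 1 i).filter fun k => Odd (nicfA α k)).card

/-- `λ_i`: zero if `a_i` is even, `(-1)^j` if `a_i = a_{n_j}` is the `j`-th odd partial
quotient. -/
noncomputable def lamStar (α : ℝ) (i : ℕ) : ℤ :=
  if Odd (nicfA α i) then (-1) ^ oddIdx α i else 0

/-- `γ_* = Σ_{i≥1} (a_i - 1 + ε_i + λ_i)/2 · D_{i-1}`. -/
noncomputable def gammaStar (α : ℝ) : ℝ :=
  ∑' k : ℕ,
    (((nicfA α (k + 1) : ℝ) - 1 + (nicfE α (k + 1) : ℝ) + (lamStar α (k + 1) : ℝ)) / 2) *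
      nicfD α (k + 1)

/-- `λ'_i`: zero if `a_i` is even, one if `a_i` is odd. -/
noncomputable def lamStar2 (α : ℝ) (i : ℕ) : ℤ := if Odd (nicfA α i) then 1 else 0

/-- `γ_** = Σ_{i≥1} (a_i + λ'_i)/2 · D_{i-1}`. -/
noncomputable def gammaStar2 (α : ℝ) : ℝ :=
  ∑' k : ℕ, (((nicfA α (k + 1) : ℝ) + (lamStar2 α (k + 1) : ℝ)) / 2) * nicfD α (k + 1)

/-- The denominators `q_i`: `q_0 = 1`, `q_1 = a_1`, `q_i = a_i q_{i-1} + ε_i q_{i-2}`. -/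
noncomputable def qseq (α : ℝ) : ℕ → ℤ
  | 0 => 1
  | 1 => nicfA α 1
  | i + 2 => nicfA α (i + 2) * qseq α (i + 1) + nicfE α (i + 2) * qseq α i

/-- `ᾱ_i = q_{i-1}/q_i` (with `ᾱ_0 = 0`). -/
noncomputable def abar (α : ℝ) (i : ℕ) : ℝ :=
  if i = 0 then 0 else (qseq α (i - 1) : ℝ) / (qseq α i : ℝ)

/-- `δ_i = -(-ε_1)(-ε_2)⋯(-ε_{i+1})`. -/
noncomputable def deltaSeq (α : ℝ) (i : ℕ) : ℤ := -∏ j ∈ Finset.Icc 1 (i + 1), (-nicfE α j)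

/-- `d_n^- = (Σ_{i=1}^n t_i δ_{i-1} q_{i-1}) / (δ_{n-1} q_n)` for `γ_*` (so `t_i = λ_i`). -/
noncomputable def dminus (α : ℝ) (n : ℕ) : ℝ :=
  (∑ i ∈ Finset.Icc 1 n, (lamStar α i : ℝ) * (deltaSeq α (i - 1) : ℝ) * (qseq α (i - 1) : ℝ)) /
    ((deltaSeq α (n - 1) : ℝ) * (qseq α n : ℝ))

/-- `d_n^+ = (Σ_{i=n+1}^∞ t_i D_{i-1}) / D_{n-1}` for `γ_*` (so `t_i = λ_i`). -/
noncomputable def dplus (α : ℝ) (n : ℕ) : ℝ :=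
  (∑' k : ℕ, (lamStar α (n + 1 + k) : ℝ) * nicfD α (n + 1 + k)) / nicfD α n

/-- `d_n^-` for `γ_**` (so `t_i = λ'_i`). -/
noncomputable def dminus2 (α : ℝ) (n : ℕ) : ℝ :=
  (∑ i ∈ Finset.Icc 1 n, (lamStar2 α i : ℝ) * (deltaSeq α (i - 1) : ℝ) * (qseq α (i - 1) : ℝ)) /
    ((deltaSeq α (n - 1) : ℝ) * (qseq α n : ℝ))

/-- `d_n^+` for `γ_**` (so `t_i = λ'_i`). -/
noncomputable def dplus2 (α : ℝ) (n : ℕ) : ℝ :=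
  (∑' k : ℕ, (lamStar2 α (n + 1 + k) : ℝ) * nicfD α (n + 1 + k)) / nicfD α n

/-- `i ∈ S(γ_*)`: `|d_i^-| ≤ 1 - ᾱ_i` and `-(1-ε_{i+1}α_i) ≤ d_i^+ ≤ 1+ε_{i+1}α_i`. -/
def inS (α : ℝ) (i : ℕ) : Prop :=
  |dminus α i| ≤ 1 - abar α i ∧
    -(1 - (nicfE α (i + 1) : ℝ) * nicfT α i) ≤ dplus α i ∧
      dplus α i ≤ 1 + (nicfE α (i + 1) : ℝ) * nicfT α i

/-- `i ∈ S(γ_**)`. -/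
def inS2 (α : ℝ) (i : ℕ) : Prop :=
  |dminus2 α i| ≤ 1 - abar α i ∧
    -(1 - (nicfE α (i + 1) : ℝ) * nicfT α i) ≤ dplus2 α i ∧
      dplus2 α i ≤ 1 + (nicfE α (i + 1) : ℝ) * nicfT α i

/-- The remainders `γ_i` of the alpha-expansion of `γ`: `γ_0 = γ`,
`γ_{i+1} = {γ_i/α_i}`. -/
noncomputable def gSeq (α γ : ℝ) : ℕ → ℝ
  | 0 => γ
  | i + 1 => Int.fract (gSeq α γ i / nicfT α i)

/-- The coefficients `c_i` (for `i ≥ 1`) of the alpha-expansion of `γ`: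
`c_{i+1} = ⌊γ_i/α_i⌋`. -/
noncomputable def cCoef (α γ : ℝ) (i : ℕ) : ℤ := ⌊gSeq α γ (i - 1) / nicfT α (i - 1)⌋

/-!
Write the inhomogeneous form `2 (n α - γ_* - m)` in the successive bases given by the nearest
integer continued fraction: at index `k` it becomes a multiple of `q + ε t p + e`, where `p, q` are
odd integers, `t` is the tail of the continued fraction and `e` is the normalised sum of the future
digits `λ_i`. Its first coordinate at index `0` becomes a multiple of the conjugate form
`p - x q + D`, where `x` is the ratio of consecutive continuants and `D` the normalised sum of the
past digits. Since the digits alternate in sign, all of this can be sign-normalised so that a step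
depends only on `(a, ε)`.

For every lattice point there is a first index with `|p| ≤ |q|`, a divided cell. The product of the
two forms is invariant, so it only has to be bounded below at such cells. Either some point of the
cell has both coordinates `±1`, and the product is one of four explicit expressions in `x`, `D`,
`y = t` and `e`, or neighbouring coordinates are at least three in absolute value and a cruder
estimate suffices. The pairs `(x, D)` and `(y, e)` remain in polygons invariant under the continued
fraction steps, and the bounds for the different `R` come from the vertices of these polygons.
Removing finitely many partial quotients only weakens the bound by an arbitrarily small amount, so
one may assume `a_i ≥ R` for all `i`.
-/

/-! ### Approximation constants of irrational numbers -/

lemma exists_rat_abs_sub_lt_of_lt_den {α : ℝ} (hirr : Irrational α) (B : ℕ) :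
    ∃ q : ℚ, |α - q| < 1 / (q.den : ℝ) ^ 2 ∧ B < q.den := by
  obtain ⟨δ, hδ, hfar⟩ :=
    (hirr.eventually_forall_le_dist_cast_rat_of_den_le B).exists_gt
  obtain ⟨n, hn⟩ := exists_nat_gt (1 / δ)
  have hn0 : (0 : ℝ) < n := (by positivity : 0 < 1 / δ).trans hn
  obtain ⟨q, hq, hqn⟩ := Real.exists_rat_abs_sub_le_and_den_le α (Nat.cast_pos.1 hn0)
  have hd : (1 : ℝ) ≤ q.den := by exact_mod_cast q.den_pos
  have hdn : (q.den : ℝ) ≤ n := by exact_mod_cast hqn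
  refine ⟨q, hq.trans_lt (one_div_lt_one_div_of_lt (by positivity) (by nlinarith)), ?_⟩
  by_contra! hB
  have hclose : |α - q| < δ := by
    refine hq.trans_lt ((one_div_lt (by positivity) hδ).2 (hn.trans_le ?_))
    nlinarith
  exact (hfar q hB).not_gt hclose

lemma nint_nonneg (x : ℝ) : 0 ≤ nint x := abs_nonneg _

lemma nint_le_abs_sub_intCast (x : ℝ) (z : ℤ) : nint x ≤ |x - z| := round_le x z

lemma exists_mul_eq_add_mul_of_isCoprime {p d : ℤ} (hd : 0 < d) (hpd : IsCoprime p d) (r : ℤ) :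
    ∃ n z : ℤ, d ≤ n ∧ n < 2 * d ∧ n * p = r + d * z := by
  obtain ⟨u, v, huv⟩ := hpd
  have hmod := Int.emod_add_mul_ediv (r * u) d
  refine ⟨r * u % d + d, p - r * v - r * u / d * p, ?_, ?_, ?_⟩
  · linarith [Int.emod_nonneg (r * u) hd.ne']
  · linarith [Int.emod_lt_of_pos (r * u) hd]
  · linear_combination p * hmod + r * huv

lemma exists_mul_nint_le_of_abs_sub_lt {α : ℝ} {q : ℚ} (hq : |α - q| < 1 / (q.den : ℝ) ^ 2)
    (γ : ℝ) : ∃ n : ℤ, (q.den : ℤ) ≤ n ∧ |(n : ℝ)| * nint (n * α - γ) ≤ 5 := by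
  obtain ⟨r, hr⟩ : ∃ r : ℤ, |(r : ℝ) - q.den * γ| ≤ 1 / 2 :=
    ⟨round (q.den * γ), by rw [abs_sub_comm]; exact abs_sub_round _⟩
  have hcop : IsCoprime q.num (q.den : ℤ) := Int.isCoprime_iff_gcd_eq_one.2 q.reduced
  obtain ⟨n, z, hn, hn', hz⟩ :=
    exists_mul_eq_add_mul_of_isCoprime (by exact_mod_cast q.den_pos) hcop r
  refine ⟨n, hn, ?_⟩
  have hd : (0 : ℝ) < q.den := by exact_mod_cast q.den_pos
  replace hn : (q.den : ℝ) ≤ n := by exact_mod_cast hn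
  replace hn' : (n : ℝ) < 2 * q.den := by exact_mod_cast hn'
  have hn0 : (0 : ℝ) < n := hd.trans_le hn
  have hsplit : n * α - γ - z = n * (α - q) + (r - q.den * γ) / q.den := by
    have hz' : (n : ℝ) * q.num = r + q.den * z := by exact_mod_cast hz
    have hnum : (q.num : ℝ) = q * q.den := by exact_mod_cast (Rat.mul_den_eq_num q).symm
    rw [hnum] at hz'
    field_simp
    linear_combination hz'
  have hdist : nint (n * α - γ) ≤ 5 / 2 / q.den :=
    calc nint (n * α - γ) ≤ |n * α - γ - z| := nint_le_abs_sub_intCast _ z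
      _ ≤ |n * (α - q)| + |(r - q.den * γ) / q.den| := by
          rw [hsplit]; exact abs_add_le _ _
      _ ≤ 2 * q.den * (1 / (q.den : ℝ) ^ 2) + 1 / 2 / q.den := by
          rw [abs_mul, abs_div, abs_of_pos hn0, abs_of_pos hd]; gcongr
      _ = 5 / 2 / q.den := by field_simp; norm_num
  calc |(n : ℝ)| * nint (n * α - γ) ≤ 2 * q.den * (5 / 2 / q.den) := by
        rw [abs_of_pos hn0]; exact mul_le_mul hn'.le hdist (nint_nonneg _) (by positivity)
    _ = 5 := by field_simp

lemma frequently_mul_nint_le {α : ℝ} (hirr : Irrational α) (γ : ℝ) :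
    ∃ᶠ n : ℤ in cofinite, |(n : ℝ)| * nint (n * α - γ) ≤ 5 := by
  rw [Filter.frequently_cofinite_iff_infinite]
  intro hfin
  obtain ⟨B, hB⟩ := hfin.bddAbove
  obtain ⟨q, hq, hBq⟩ := exists_rat_abs_sub_lt_of_lt_den hirr B.toNat
  obtain ⟨n, hn, hle⟩ := exists_mul_nint_le_of_abs_sub_lt hq γ
  have := hB hle
  omega

lemma Mval_le_five {α : ℝ} (hirr : Irrational α) (γ : ℝ) : Mval α γ ≤ 5 := by
  refine liminf_le_of_frequently_le (frequently_mul_nint_le hirr γ) ⟨0, ?_⟩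
  exact eventually_map.2 (.of_forall fun n => mul_nonneg (by positivity) (nint_nonneg _))

lemma le_Mval {α γ c : ℝ} (hirr : Irrational α)
    (h : ∀ η > 0, ∀ᶠ n : ℤ in cofinite, c - η ≤ |(n : ℝ)| * nint (n * α - γ)) :
    c ≤ Mval α γ := by
  refine le_of_forall_pos_sub_le fun η hη => ?_
  refine le_liminf_of_le ?_ (h η hη)
  exact IsCoboundedUnder.of_frequently_le (frequently_mul_nint_le hirr γ)

lemma Mval_le_rho {α γ : ℝ} (hirr : Irrational α) (hγ : ¬∃ p q : ℤ, γ = (p : ℝ) + (q : ℝ) * α) :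
    Mval α γ ≤ rho α := by
  refine le_csSup ⟨5, ?_⟩ ⟨γ, hγ, rfl⟩
  rintro m ⟨γ', -, rfl⟩
  exact Mval_le_five hirr _

/-! ### Sign-normalised expansions and divided cells -/

/-- The step `x ↦ 1 / (a + ε x)` for the ratios of consecutive continuants. -/
noncomputable def ratioStep (a ε : ℤ) (x : ℝ) : ℝ := 1 / (a + ε * x)

/-- The step for the sign-normalised sum of the past digits, where `x` is the current ratio of
consecutive continuants. -/
noncomputable def pastSumStep (a ε : ℤ) (x D : ℝ) : ℝ :=
  if Odd a then ratioStep a ε x * (-1 + ε * D) else -(ratioStep a ε x * (ε * D))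

/-- The backward step for the sign-normalised sum of the future digits, where `y` is the current
tail of the continued fraction. -/
noncomputable def futureSumStep (a : ℤ) (y e : ℝ) : ℝ := if Odd a then y * (1 - e) else y * e

/-- The change of coordinates of a lattice point from one continued fraction basis to the next,
with the sign normalised after every odd partial quotient. -/
def latticeStep (a ε : ℤ) (z : ℤ × ℤ) : ℤ × ℤ :=
  if Odd a then (-z.2, -(a * z.2 + ε * z.1 + 1)) else (z.2, a * z.2 + ε * z.1)

lemma abs_intCast_eq_one {ε : ℤ} (hε : |ε| = 1) : |(ε : ℝ)| = 1 := by exact_mod_cast hε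

lemma one_le_abs_of_odd {n : ℤ} (hn : Odd n) : 1 ≤ |n| :=
  Int.one_le_abs fun h => by simp [h] at hn

lemma three_le_abs_of_odd {n : ℤ} (hn : Odd n) (h1 : |n| ≠ 1) : 3 ≤ |n| := by
  obtain ⟨m, hm⟩ := odd_abs.2 hn
  have := abs_nonneg n
  omega

/-- A nearest integer type continued fraction with partial quotients `a k`, signs `ε k` and tails
`t k`, together with future digit sums `e k`: the digit at `k` is `0` if `a k` is even, the digits
at odd partial quotients alternate, and `e k` is the sum of the digits from `k` on, relative to the
current scale and to the sign of the next nonzero digit. -/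
structure SignedExpansion where
  a : ℕ → ℤ
  ε : ℕ → ℤ
  t : ℕ → ℝ
  e : ℕ → ℝ
  two_le_a : ∀ k, 2 ≤ a k
  abs_ε : ∀ k, |ε k| = 1
  ε_succ_of_a_eq_two : ∀ k, a k = 2 → ε (k + 1) = 1
  t_pos : ∀ k, 0 < t k
  t_lt_half : ∀ k, t k < 1 / 2
  t_mul : ∀ k, t k * (a k + ε (k + 1) * t (k + 1)) = 1
  e_eq : ∀ k, e k = futureSumStep (a k) (t k) (e (k + 1))
  abs_e_le_one : ∀ k, |e k| ≤ 1

namespace SignedExpansion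

/-- The expansion with its first `K` partial quotients removed. -/
def drop (C : SignedExpansion) (K : ℕ) : SignedExpansion where
  a k := C.a (K + k)
  ε k := C.ε (K + k)
  t k := C.t (K + k)
  e k := C.e (K + k)
  two_le_a _ := C.two_le_a _
  abs_ε _ := C.abs_ε _
  ε_succ_of_a_eq_two _ := C.ε_succ_of_a_eq_two _
  t_pos _ := C.t_pos _
  t_lt_half _ := C.t_lt_half _
  t_mul _ := C.t_mul _
  e_eq _ := C.e_eq _
  abs_e_le_one _ := C.abs_e_le_one _

variable (C : SignedExpansion)

/-- The inhomogeneous linear form `q + ε t p + e` in the coordinates `(p, q)` at index `k`. -/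
noncomputable def form (k : ℕ) (z : ℤ × ℤ) : ℝ := z.2 + C.ε k * C.t k * z.1 + C.e k

/-- The coordinates at index `k` of the lattice point with coordinates `z` at index `0`. -/
def coords (z : ℤ × ℤ) : ℕ → ℤ × ℤ
  | 0 => z
  | k + 1 => latticeStep (C.a k) (C.ε k) (coords z k)

/-- The ratios `q_{k-1} / q_k` of consecutive continuants. -/
noncomputable def ratio : ℕ → ℝ
  | 0 => 0
  | k + 1 => ratioStep (C.a k) (C.ε k) (ratio k)

/-- The sign-normalised sum of the digits before `k`, relative to the current scale. -/
noncomputable def pastSum : ℕ → ℝ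
  | 0 => 0
  | k + 1 => pastSumStep (C.a k) (C.ε k) (C.ratio k) (pastSum k)

/-- The form `p - q x + D` conjugate to `form`: a multiple of the first coordinate at index `0`. -/
noncomputable def dualForm (k : ℕ) (z : ℤ × ℤ) : ℝ := z.1 - z.2 * C.ratio k + C.pastSum k

/-- The lower bound `c`, up to an arbitrarily small error, for `|p| · |form|` at the lattice
points with odd coordinates at index `k` and large `p`. -/
def OddFormBound (k : ℕ) (c : ℝ) : Prop :=
  ∀ η > 0, ∃ B : ℝ, ∀ z : ℤ × ℤ, Odd z.1 → Odd z.2 → |C.form k z| ≤ 1 → B < |(z.1 : ℝ)| →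
    c - η ≤ |(z.1 : ℝ) * C.form k z|

lemma abs_ε_cast (k : ℕ) : |(C.ε k : ℝ)| = 1 := abs_intCast_eq_one (C.abs_ε k)

lemma abs_ε_mul_t (k : ℕ) : |(C.ε k : ℝ) * C.t k| = C.t k := by
  rw [abs_mul, C.abs_ε_cast, one_mul, abs_of_pos (C.t_pos k)]

lemma t_mul_abs_form_latticeStep (k : ℕ) (z : ℤ × ℤ) :
    C.t k * |C.form (k + 1) (latticeStep (C.a k) (C.ε k) z)| = |C.form k z| := by
  have ht := C.t_mul k
  have he := C.e_eq k
  conv_lhs => rw [← abs_of_pos (C.t_pos k), ← abs_mul]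
  unfold form latticeStep
  unfold futureSumStep at he
  split_ifs at he ⊢
  · rw [he, ← abs_neg]
    congr 1
    push_cast
    linear_combination (z.2 : ℝ) * ht
  · rw [he]
    congr 1
    push_cast
    linear_combination (z.2 : ℝ) * ht

lemma abs_fst_latticeStep (a ε : ℤ) (z : ℤ × ℤ) : |(latticeStep a ε z).1| = |z.2| := by
  unfold latticeStep
  split_ifs <;> simp

lemma abs_abs_snd_sub_le (k : ℕ) (z : ℤ × ℤ) :
    |(|(z.2 : ℝ)| - C.t k * |(z.1 : ℝ)|)| ≤ |C.form k z| + |C.e k| := by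
  have hz : (z.2 : ℝ) = C.form k z - C.e k - C.ε k * C.t k * z.1 := by unfold form; ring
  have hsub : (z.2 : ℝ) - -(C.ε k * C.t k * z.1) = C.form k z - C.e k := by rw [hz]; ring
  calc |(|(z.2 : ℝ)| - C.t k * |(z.1 : ℝ)|)|
      = |(|(z.2 : ℝ)| - |-(C.ε k * C.t k * z.1)|)| := by rw [abs_neg, abs_mul, C.abs_ε_mul_t]
    _ ≤ |(z.2 : ℝ) - -(C.ε k * C.t k * z.1)| := abs_abs_sub_abs_le _ _
    _ ≤ |C.form k z| + |C.e k| := by rw [hsub]; exact abs_sub _ _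

lemma odd_latticeStep {a ε : ℤ} (hε : |ε| = 1) {z : ℤ × ℤ} (h₁ : Odd z.1) (h₂ : Odd z.2) :
    Odd (latticeStep a ε z).1 ∧ Odd (latticeStep a ε z).2 := by
  have hεodd : Odd ε := odd_abs.1 (hε ▸ odd_one)
  unfold latticeStep
  split_ifs with ha
  · exact ⟨h₂.neg, (((ha.mul h₂).add_odd (hεodd.mul h₁)).add_odd odd_one).neg⟩
  · exact ⟨h₂, ((Int.not_odd_iff_even.1 ha).mul_right _).add_odd (hεodd.mul h₁)⟩

lemma OddFormBound.of_succ {C : SignedExpansion} {k : ℕ} {c : ℝ} (h : C.OddFormBound (k + 1) c) :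
    C.OddFormBound k c := by
  intro η hη
  obtain ⟨B, hB⟩ := h (η / 2) (by positivity)
  have ht := C.t_pos k
  refine ⟨(|B| + 2 + |c| + 4 * |c| / η) / C.t k, fun z hz₁ hz₂ hform hlarge => ?_⟩
  by_contra! hsmall
  set z' := latticeStep (C.a k) (C.ε k) z
  have hform' : C.t k * |C.form (k + 1) z'| = |C.form k z| := C.t_mul_abs_form_latticeStep k z
  have hz' : |(z'.1 : ℝ)| = |(z.2 : ℝ)| := by exact_mod_cast abs_fst_latticeStep _ _ z
  have hz₂' := abs_le.1 (C.abs_abs_snd_sub_le k z)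
  have he := C.abs_e_le_one k
  rw [div_lt_iff₀' ht] at hlarge
  have hc : 0 ≤ 4 * |c| / η := by positivity
  set w := C.t k * |(z.1 : ℝ)|
  have hw : |c| + 4 * |c| / η < w := by linarith [abs_nonneg B]
  have hw0 : 0 < w := (by positivity : 0 ≤ |c| + 4 * |c| / η).trans_lt hw
  have hprod : w * |C.form (k + 1) z'| < c - η := by
    rwa [abs_mul, ← hform', ← mul_assoc, mul_comm _ (C.t k)] at hsmall
  have hcabs := le_abs_self c
  have hform1 : |C.form (k + 1) z'| ≤ 1 := by
    by_contra! hlt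
    nlinarith
  have hmain := hB z' (odd_latticeStep (C.abs_ε k) hz₁ hz₂).1
    (odd_latticeStep (C.abs_ε k) hz₁ hz₂).2 hform1
    (by linarith [le_abs_self B, abs_nonneg c])
  have hupper : |(z'.1 : ℝ)| * |C.form (k + 1) z'| ≤ (w + 2) * |C.form (k + 1) z'| := by
    gcongr
    linarith
  rw [abs_mul] at hmain
  have hη' : η / 4 < |C.form (k + 1) z'| := by linarith
  have hc' : 4 * |c| / η * (η / 4) = |c| := by field_simp
  have hge : 4 * |c| / η * (η / 4) ≤ w * |C.form (k + 1) z'| := by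
    gcongr
    linarith [abs_nonneg c]
  linarith

lemma OddFormBound.of_drop {K : ℕ} {c : ℝ} (h : (C.drop K).OddFormBound 0 c) :
    C.OddFormBound 0 c :=
  Nat.decreasingInduction (motive := fun k _ => C.OddFormBound k c) (fun _ _ hk => hk.of_succ) h
    K.zero_le

lemma odd_coords {z : ℤ × ℤ} (h₁ : Odd z.1) (h₂ : Odd z.2) (k : ℕ) :
    Odd (C.coords z k).1 ∧ Odd (C.coords z k).2 := by
  induction k with
  | zero => exact ⟨h₁, h₂⟩
  | succ k ih => exact odd_latticeStep (C.abs_ε k) ih.1 ih.2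

lemma coords_succ (z : ℤ × ℤ) (k : ℕ) :
    C.coords z (k + 1) = latticeStep (C.a k) (C.ε k) (C.coords z k) := rfl

lemma abs_fst_coords_succ (z : ℤ × ℤ) (k : ℕ) : |(C.coords z (k + 1)).1| = |(C.coords z k).2| :=
  abs_fst_latticeStep _ _ _

lemma t_mul_abs_form_coords_succ (z : ℤ × ℤ) (k : ℕ) :
    C.t k * |C.form (k + 1) (C.coords z (k + 1))| = |C.form k (C.coords z k)| :=
  C.t_mul_abs_form_latticeStep k _

lemma exists_abs_fst_le_abs_snd (z : ℤ × ℤ) : ∃ k, |(C.coords z k).1| ≤ |(C.coords z k).2| := by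
  obtain ⟨k, hk⟩ := WellFounded.not_rel_apply_succ (r := (· < ·)) fun k => (C.coords z k).1.natAbs
  refine ⟨k, ?_⟩
  rw [← abs_fst_coords_succ, Int.abs_eq_natAbs, Int.abs_eq_natAbs]
  exact_mod_cast not_lt.1 hk

lemma form_zero_ne_zero (he : ∀ k, |C.e k| < 1 / 2) {z : ℤ × ℤ} (h₁ : Odd z.1) (h₂ : Odd z.2) :
    C.form 0 z ≠ 0 := by
  intro h0
  have hform (k : ℕ) : |C.form k (C.coords z k)| = 0 := by
    induction k with
    | zero => simpa [coords] using h0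
    | succ k ih => simpa [(C.t_pos k).ne', ih] using C.t_mul_abs_form_coords_succ z k
  obtain ⟨k, hk⟩ := C.exists_abs_fst_le_abs_snd z
  have hle := (abs_le.1 (C.abs_abs_snd_sub_le k (C.coords z k))).2
  have hk' : |((C.coords z k).1 : ℝ)| ≤ |((C.coords z k).2 : ℝ)| := by exact_mod_cast hk
  have hone : (1 : ℝ) ≤ |((C.coords z k).1 : ℝ)| := by
    exact_mod_cast one_le_abs_of_odd (C.odd_coords h₁ h₂ k).1
  nlinarith [hform k, he k, C.t_lt_half k]

lemma exists_dividedCell {z : ℤ × ℤ} (hform : |C.form 0 z| ≤ 1) (hz : 4 < |(z.1 : ℝ)|) :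
    ∃ k, |(C.coords z k).2| ≤ |(C.coords z k).1| ∧
      |(C.coords z k).2| ≤ |(C.coords z (k + 1)).2| := by
  have hex := C.exists_abs_fst_le_abs_snd z
  have hspec := Nat.find_spec hex
  have hzero : Nat.find hex ≠ 0 := by
    intro h0
    rw [h0] at hspec
    have hz' : |(z.1 : ℝ)| ≤ |(z.2 : ℝ)| := by exact_mod_cast hspec
    nlinarith [(abs_le.1 (C.abs_abs_snd_sub_le 0 z)).2, C.abs_e_le_one 0, C.t_lt_half 0]
  obtain ⟨k, hk⟩ := Nat.exists_eq_succ_of_ne_zero hzero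
  rw [hk, Nat.succ_eq_add_one, abs_fst_coords_succ] at hspec
  exact ⟨k, (not_le.1 (Nat.find_min hex (by omega))).le, hspec⟩

end SignedExpansion

/-! ### Reduction to inequalities on invariant regions -/

/-- The inequality that forces the bound `c` at a divided cell with a vertex whose coordinates are
`±1`: one condition for each pair of signs, opposite pairs being equivalent up to the sign of `D`
and `e`. -/
def VertexBound (c x D y e : ℝ) (ε : ℤ) : Prop :=
  c * (1 + ε * x * y) ≤ (1 - x + D) * (1 + ε * y + e) ∧
  c * (1 + ε * x * y) ≤ (1 - x - D) * (1 + ε * y - e) ∧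
  c * (1 + ε * x * y) ≤ (1 + x + D) * (1 - ε * y - e) ∧
  c * (1 + ε * x * y) ≤ (1 + x - D) * (1 - ε * y + e)

/-- The inequality that forces the bound `c` at a divided cell without such a vertex. The integers
`A`, `b`, `B` are, up to sign, the three successive first coordinates, so that `a b` differs from
`A + B` by the digit `l`. -/
def NonvertexBound (c : ℝ) (a : ℤ) (ξ ζ δ₁ δ₂ : ℝ) : Prop :=
  ∀ A b B l : ℤ, |l| ≤ 1 → a * b = A + B + l → Odd b → |b| ≤ |A| → |b| ≤ |B| →
    3 ≤ |A| → 3 ≤ |B| → c * (a + ζ + ξ) ≤ |A + ξ * b + δ₁| * |B + ζ * b + δ₂|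

/-- A region for the pasts `(x, D)` at an index with sign `ε` which contains the empty past and is
invariant under the steps with partial quotients at least `R`. -/
structure IsPastRegion (R : ℤ) (Q : ℝ → ℝ → ℤ → Prop) : Prop where
  zero_mem : ∀ ε : ℤ, |ε| = 1 → Q 0 0 ε
  step_mem : ∀ {x D : ℝ} {ε a ε' : ℤ}, Q x D ε → |ε| = 1 → |ε'| = 1 → R ≤ a →
    (a = 2 → ε' = 1) → Q (ratioStep a ε x) (pastSumStep a ε x D) ε'
  nonneg : ∀ {x D : ℝ} {ε : ℤ}, Q x D ε → 0 ≤ x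
  lt_one : ∀ {x D : ℝ} {ε : ℤ}, Q x D ε → x < 1

namespace SignedExpansion

variable {C : SignedExpansion} {R : ℤ} {Q : ℝ → ℝ → ℤ → Prop} {c : ℝ}

lemma mem_pastRegion (hQ : IsPastRegion R Q) (hR : ∀ k, R ≤ C.a k) (k : ℕ) :
    Q (C.ratio k) (C.pastSum k) (C.ε k) := by
  induction k with
  | zero => exact hQ.zero_mem _ (C.abs_ε 0)
  | succ k ih =>
    exact hQ.step_mem ih (C.abs_ε _) (C.abs_ε _) (hR k) (C.ε_succ_of_a_eq_two k)

section Ratio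

variable (hx : ∀ k, 0 ≤ C.ratio k ∧ C.ratio k < 1)
include hx

lemma neg_one_lt_ε_mul_ratio (k : ℕ) : -1 < (C.ε k : ℝ) * C.ratio k := by
  have habs : |(C.ε k : ℝ) * C.ratio k| < 1 := by
    rw [abs_mul, C.abs_ε_cast, one_mul, abs_of_nonneg (hx k).1]; exact (hx k).2
  exact (abs_lt.1 habs).1

lemma ratio_denom_pos (k : ℕ) : 0 < (C.a k : ℝ) + C.ε k * C.ratio k := by
  have ha : (2 : ℝ) ≤ C.a k := by exact_mod_cast C.two_le_a k
  linarith [neg_one_lt_ε_mul_ratio hx k]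

lemma ratio_succ_mul (k : ℕ) : C.ratio (k + 1) * (C.a k + C.ε k * C.ratio k) = 1 := by
  simp only [ratio, ratioStep]
  exact one_div_mul_cancel (ratio_denom_pos hx k).ne'

lemma abs_dualForm_latticeStep (z : ℤ × ℤ) (k : ℕ) :
    |C.dualForm (k + 1) (latticeStep (C.a k) (C.ε k) z)| =
      C.ratio (k + 1) * |C.dualForm k z| := by
  have hmul := ratio_succ_mul hx k
  have hε : C.ratio (k + 1) * |C.dualForm k z| =
      |C.ratio (k + 1) * (C.ε k * C.dualForm k z)| := by
    rw [abs_mul, abs_mul, C.abs_ε_cast, one_mul, abs_of_nonneg (hx (k + 1)).1]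
  have hD : C.pastSum (k + 1) = if Odd (C.a k) then C.ratio (k + 1) * (-1 + C.ε k * C.pastSum k)
      else -(C.ratio (k + 1) * (C.ε k * C.pastSum k)) := rfl
  rw [hε]
  unfold dualForm latticeStep
  split_ifs at hD ⊢
  · rw [hD]
    congr 1
    push_cast
    linear_combination (z.2 : ℝ) * hmul
  · rw [hD, ← abs_neg]
    congr 1
    push_cast
    linear_combination (z.2 : ℝ) * hmul

lemma one_add_ε_mul_t_mul_ratio_pos (k : ℕ) : 0 < 1 + (C.ε k : ℝ) * C.t k * C.ratio k := by
  have habs : |(C.ε k : ℝ) * C.t k * C.ratio k| < 1 := by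
    rw [abs_mul, C.abs_ε_mul_t, abs_of_nonneg (hx k).1]
    exact mul_lt_one_of_nonneg_of_lt_one_left (C.t_pos k).le (by linarith [C.t_lt_half k])
      (hx k).2.le
  linarith [(abs_lt.1 habs).1]

-- Up to sign, `form` and `dualForm` scale by `t k` and `ratio (k + 1)` at each step, and these
-- factors are absorbed by the determinant `1 + ε t x` of the two forms.
lemma abs_dualForm_mul_form (z : ℤ × ℤ) (k : ℕ) :
    |C.dualForm k (C.coords z k) * C.form k (C.coords z k)| =
      |z.1 * C.form 0 z| * (1 + C.ε k * C.t k * C.ratio k) := by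
  induction k with
  | zero => simp [coords, ratio, dualForm, pastSum]
  | succ k ih =>
    have ht := C.t_pos k
    have hform := C.t_mul_abs_form_coords_succ z k
    have hdet : C.ratio (k + 1) * (1 + C.ε k * C.t k * C.ratio k) =
        C.t k * (1 + C.ε (k + 1) * C.t (k + 1) * C.ratio (k + 1)) := by
      linear_combination (-C.ratio (k + 1)) * C.t_mul k + C.t k * ratio_succ_mul hx k
    refine mul_left_cancel₀ ht.ne' ?_
    rw [abs_mul] at ih ⊢
    rw [coords_succ, abs_dualForm_latticeStep hx, ← coords_succ]
    linear_combination (C.ratio (k + 1) * |C.dualForm k (C.coords z k)|) * hform +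
      C.ratio (k + 1) * ih + |z.1 * C.form 0 z| * hdet

end Ratio

lemma le_abs_dualForm_mul_form_of_vertex {k : ℕ} {p q : ℤ}
    (hv : VertexBound c (C.ratio k) (C.pastSum k) (C.t k) (C.e k) (C.ε k))
    (hp : |p| = 1) (hq : |q| = 1) :
    c * (1 + C.ε k * C.t k * C.ratio k) ≤ |C.dualForm k (p, q) * C.form k (p, q)| := by
  obtain ⟨h₁, h₂, h₃, h₄⟩ := hv
  unfold dualForm form
  rcases (abs_eq zero_le_one).1 hp with rfl | rfl <;>
    rcases (abs_eq zero_le_one).1 hq with rfl | rfl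
  · exact le_abs.2 (.inl (by push_cast; linarith))
  · exact le_abs.2 (.inr (by push_cast; linarith))
  · exact le_abs.2 (.inr (by push_cast; linarith))
  · exact le_abs.2 (.inl (by push_cast; linarith))

lemma exists_latticeStep_eq (a ε : ℤ) (z : ℤ × ℤ) : ∃ σ l : ℤ, |σ| = 1 ∧ |l| ≤ 1 ∧
    a * z.2 = -(ε * z.1) + σ * (latticeStep a ε z).2 + l ∧
    (latticeStep a ε z).1 = σ * z.2 := by
  unfold latticeStep
  split_ifs
  · exact ⟨-1, -1, by norm_num, by norm_num, by ring, by ring⟩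
  · exact ⟨1, 0, by norm_num, by norm_num, by ring, by ring⟩

lemma abs_dualForm_eq (k : ℕ) (z : ℤ × ℤ) : |C.dualForm k z| =
    |(-(C.ε k * z.1) : ℤ) + C.ε k * C.ratio k * z.2 + -(C.ε k * C.pastSum k)| := by
  rw [← one_mul |C.dualForm _ _|, ← C.abs_ε_cast k, ← abs_mul, ← abs_neg]
  unfold dualForm
  push_cast
  ring_nf

lemma abs_form_eq_of_fst_eq {k : ℕ} {σ q : ℤ} {z : ℤ × ℤ} (hσ : |σ| = 1) (hz : z.1 = σ * q) :
    |C.form k z| = |(σ * z.2 : ℤ) + C.ε k * C.t k * q + σ * C.e k| := by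
  have hσR := abs_intCast_eq_one hσ
  have hσ2 : (σ : ℝ) * σ = 1 := by rw [← abs_mul_abs_self, hσR, one_mul]
  rw [← one_mul |C.form _ _|, ← hσR, ← abs_mul]
  unfold form
  congr 1
  rw [hz]
  push_cast
  linear_combination (C.ε k * C.t k * q : ℝ) * hσ2

lemma le_abs_dualForm_mul_form_of_nonvertex {z : ℤ × ℤ} {k : ℕ} (hz₁ : Odd z.1) (hz₂ : Odd z.2)
    (hn : ∀ ξ ζ δ δ' : ℝ, |ξ| = |C.ratio k| → |ζ| = C.t (k + 1) → |δ| = |C.pastSum k| →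
      |δ'| = |C.e (k + 1)| → NonvertexBound c (C.a k) ξ ζ δ δ')
    (hle : |(C.coords z k).2| ≤ |(C.coords z k).1|)
    (hle' : |(C.coords z k).2| ≤ |(C.coords z (k + 1)).2|)
    (hp : |(C.coords z k).1| ≠ 1) (hq : |(C.coords z (k + 1)).2| ≠ 1) :
    c * (1 + C.ε k * C.t k * C.ratio k) ≤
      |C.dualForm k (C.coords z k) * C.form k (C.coords z k)| := by
  obtain ⟨σ, l, hσ, hl, hab, hfst⟩ := exists_latticeStep_eq (C.a k) (C.ε k) (C.coords z k)
  rw [← coords_succ] at hab hfst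
  have hodd := C.odd_coords hz₁ hz₂
  have hε := C.abs_ε k
  have hεR := C.abs_ε_cast k
  have hσR := abs_intCast_eq_one hσ
  have habsA : |-(C.ε k * (C.coords z k).1)| = |(C.coords z k).1| := by
    rw [abs_neg, abs_mul, hε, one_mul]
  have habsB : |σ * (C.coords z (k + 1)).2| = |(C.coords z (k + 1)).2| := by
    rw [abs_mul, hσ, one_mul]
  have hbound := hn (C.ε k * C.ratio k) (C.ε (k + 1) * C.t (k + 1)) (-(C.ε k * C.pastSum k))
    (σ * C.e (k + 1)) (by rw [abs_mul, hεR, one_mul]) (C.abs_ε_mul_t _)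
    (by rw [abs_neg, abs_mul, hεR, one_mul]) (by rw [abs_mul, hσR, one_mul])
    _ _ _ l hl hab (hodd k).2 (by rwa [habsA]) (by rwa [habsB])
    (by rw [habsA]; exact three_le_abs_of_odd (hodd k).1 hp)
    (by rw [habsB]; exact three_le_abs_of_odd (hodd (k + 1)).2 hq)
  rw [← abs_dualForm_eq, ← abs_form_eq_of_fst_eq hσ hfst] at hbound
  rw [abs_mul, ← C.t_mul_abs_form_coords_succ]
  have hscaled := mul_le_mul_of_nonneg_left hbound (C.t_pos k).le
  linear_combination hscaled - c * C.t_mul k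

lemma t_mul_a_sub_le (k : ℕ) : C.t k * (C.a k - C.t (k + 1)) ≤ 1 := by
  have hsucc := neg_le_of_abs_le (C.abs_ε_mul_t (k + 1)).le
  calc C.t k * (C.a k - C.t (k + 1)) ≤ C.t k * (C.a k + C.ε (k + 1) * C.t (k + 1)) :=
        mul_le_mul_of_nonneg_left (by linarith) (C.t_pos k).le
    _ = 1 := C.t_mul k

lemma t_mul_le (hR : ∀ k, R ≤ C.a k) (k : ℕ) : C.t k * (R - 1 / 2) ≤ 1 := by
  have hRk : (R : ℝ) ≤ C.a k := by exact_mod_cast hR k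
  refine le_trans (mul_le_mul_of_nonneg_left ?_ (C.t_pos k).le) (C.t_mul_a_sub_le k)
  linarith [C.t_lt_half (k + 1)]

theorem oddFormBound_of_regions {F : ℝ → ℝ → Prop} (hQ : IsPastRegion R Q)
    (hR : ∀ k, R ≤ C.a k) (hF : ∀ k, F (C.t k) (C.e k))
    (hv : ∀ {x D y e : ℝ} {ε : ℤ}, |ε| = 1 → Q x D ε → 0 < y → y < 1 / 2 →
      y * (R - 1 / 2) ≤ 1 → F y e → VertexBound c x D y e ε)
    (hn : ∀ {x D y e ξ ζ δ δ' : ℝ} {ε a : ℤ}, Q x D ε → y < 1 / 2 → y * (R - 1 / 2) ≤ 1 →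
      F y e → R ≤ a → |ξ| = x → |ζ| = y → |δ| = |D| → |δ'| = |e| →
      NonvertexBound c a ξ ζ δ δ') :
    C.OddFormBound 0 c := by
  intro η hη
  refine ⟨4, fun z hz₁ hz₂ hform hlarge => ?_⟩
  have hQk := mem_pastRegion hQ hR
  have hx (k : ℕ) : 0 ≤ C.ratio k ∧ C.ratio k < 1 := ⟨hQ.nonneg (hQk k), hQ.lt_one (hQk k)⟩
  suffices h : ∃ k, c * (1 + C.ε k * C.t k * C.ratio k) ≤
      |C.dualForm k (C.coords z k) * C.form k (C.coords z k)| by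
    obtain ⟨k, hk⟩ := h
    rw [abs_dualForm_mul_form hx] at hk
    linarith [le_of_mul_le_mul_right hk (one_add_ε_mul_t_mul_ratio_pos hx k)]
  have hvertex (k : ℕ) (hp : |(C.coords z k).1| = 1) (hq : |(C.coords z k).2| = 1) :=
    le_abs_dualForm_mul_form_of_vertex
      (hv (C.abs_ε k) (hQk k) (C.t_pos k) (C.t_lt_half k) (t_mul_le hR k) (hF k)) hp hq
  obtain ⟨k, hle, hle'⟩ := C.exists_dividedCell hform hlarge
  have hone := one_le_abs_of_odd (C.odd_coords hz₁ hz₂ k).2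
  by_cases hp : |(C.coords z k).1| = 1
  · exact ⟨k, hvertex k hp (le_antisymm (hp ▸ hle) hone)⟩
  by_cases hq : |(C.coords z (k + 1)).2| = 1
  · refine ⟨k + 1, hvertex (k + 1) ?_ hq⟩
    rw [abs_fst_coords_succ]
    exact le_antisymm (hq ▸ hle') hone
  · exact ⟨k, le_abs_dualForm_mul_form_of_nonvertex hz₁ hz₂ (fun ξ ζ δ δ' hξ hζ =>
      hn (hQk k) (C.t_lt_half (k + 1)) (t_mul_le hR (k + 1)) (hF (k + 1)) (hR k)
        (hξ.trans (abs_of_nonneg (hx k).1)) hζ) hle hle' hp hq⟩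

end SignedExpansion

/-! ### Future sums and cells without a small vertex -/

/-- The region of pairs `(y, e)` confining a tail `y` and the sum `e` of the future digits. -/
structure FutureWedge (τ t y e : ℝ) : Prop where
  nonneg : 0 ≤ e
  le : e ≤ y
  sub_le : y - e ≤ τ
  add_le : y + e ≤ t

/-- The inequalities that make `FutureWedge τ t` invariant under the steps whose partial quotient is
at least `o` if it is odd and at least `m` if it is even. -/
structure IsInvariantWedge (o m τ t : ℝ) : Prop where
  one_le_o : 1 ≤ o
  τ_nonneg : 0 ≤ τ
  τ_le_one : τ ≤ 1
  t_nonneg : 0 ≤ t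
  t_le_one : t ≤ 1
  odd_add : t * τ ≤ t * o - 2
  even_sub : τ ^ 2 ≤ m * τ - 1
  odd_sub : t ≤ τ * (2 * o - 1)
  even_add : 1 ≤ t * (m - 1)

lemma isClosed_setOf_futureWedge (τ t y : ℝ) : IsClosed {e | FutureWedge τ t y e} := by
  have hset : {e | FutureWedge τ t y e} = Set.Icc 0 y ∩ {e | y - e ≤ τ} ∩ {e | y + e ≤ t} := by
    ext e
    exact ⟨fun h => ⟨⟨⟨h.nonneg, h.le⟩, h.sub_le⟩, h.add_le⟩,
      fun h => ⟨h.1.1.1, h.1.1.2, h.1.2, h.2⟩⟩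
  rw [hset]
  exact (isClosed_Icc.inter (isClosed_le (by fun_prop) (by fun_prop))).inter
    (isClosed_le (by fun_prop) (by fun_prop))

lemma FutureWedge.step {o m τ t : ℝ} (hw : IsInvariantWedge o m τ t) {y e y' : ℝ} {a : ℤ}
    (hy0 : 0 < y) (hy0' : 0 < y') (hy' : y' < 1 / 2) (hy : y * (a - y') ≤ 1)
    (ho : Odd a → o ≤ a) (hm : ¬Odd a → m ≤ a) (he : FutureWedge τ t y' e) :
    FutureWedge τ t y (futureSumStep a y e) := by
  obtain ⟨ho1, hτ0, hτ1, ht0, ht1, h1, h2, h3, h4⟩ := hw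
  obtain ⟨f1, f2, f3, f4⟩ := he
  unfold futureSumStep
  split_ifs with hodd
  · have hyo : y * (o - y') ≤ 1 := le_trans (by gcongr; exact ho hodd) hy
    have hsub : y * t ≤ 2 * τ := by nlinarith
    have hadd : y * (2 - e) ≤ t := by nlinarith
    exact ⟨mul_nonneg hy0.le (by linarith), by nlinarith, by nlinarith, by linarith⟩
  · have hym : y * (m - y') ≤ 1 := le_trans (by gcongr; exact hm hodd) hy
    have hsub : 1 - e ≤ τ * (m - y') := by nlinarith
    have hadd : 1 + e ≤ t * (m - y') := by nlinarith
    exact ⟨by positivity, by nlinarith, by nlinarith, by nlinarith⟩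

lemma abs_futureSumStep_sub (a : ℤ) {y : ℝ} (hy : 0 ≤ y) (e e' : ℝ) :
    |futureSumStep a y e - futureSumStep a y e'| = y * |e - e'| := by
  have habs : y * |e - e'| = |y * (e - e')| := by rw [abs_mul, abs_of_nonneg hy]
  rw [habs]
  unfold futureSumStep
  split_ifs
  · rw [← abs_neg]
    ring_nf
  · ring_nf

namespace SignedExpansion

variable {C : SignedExpansion}

lemma mem_futureRegion {F : ℝ → ℝ → Prop} (hclosed : ∀ y, IsClosed {e | F y e})
    (hbase : ∀ k, ∃ e, |e| ≤ 1 ∧ F (C.t k) e)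
    (hstep : ∀ k e, F (C.t (k + 1)) e → F (C.t k) (futureSumStep (C.a k) (C.t k) e)) (k : ℕ) :
    F (C.t k) (C.e k) := by
  have happrox (n : ℕ) : ∀ k, ∃ e', |e' - C.e k| ≤ 2 * (1 / 2) ^ n ∧ F (C.t k) e' := by
    induction n with
    | zero =>
      intro k
      obtain ⟨e', he', hF⟩ := hbase k
      exact ⟨e', by linarith [abs_sub e' (C.e k), C.abs_e_le_one k], hF⟩
    | succ n ih =>
      intro k
      obtain ⟨e', he', hF⟩ := ih (k + 1)
      refine ⟨_, ?_, hstep k e' hF⟩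
      rw [C.e_eq k, abs_futureSumStep_sub _ (C.t_pos k).le, pow_succ]
      nlinarith [C.t_pos k, C.t_lt_half k, abs_nonneg (e' - C.e (k + 1))]
  have hlim : Tendsto (fun n : ℕ => 2 * (1 / 2 : ℝ) ^ n) atTop (nhds 0) := by
    simpa using (tendsto_pow_atTop_nhds_zero_of_lt_one (r := (1 / 2 : ℝ)) (by norm_num)
      (by norm_num)).const_mul 2
  refine (hclosed (C.t k)).closure_subset (Metric.mem_closure_iff.2 fun η hη => ?_)
  obtain ⟨n, hn⟩ := (hlim.eventually_lt_const hη).exists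
  obtain ⟨e', he', hF⟩ := happrox n k
  exact ⟨e', hF, by rw [dist_comm, Real.dist_eq]; exact he'.trans_lt hn⟩

lemma mem_futureWedge {o m τ t : ℝ} (hw : IsInvariantWedge o m τ t)
    (ho : ∀ k, Odd (C.a k) → o ≤ C.a k) (hm : ∀ k, ¬Odd (C.a k) → m ≤ C.a k)
    (hτ : ∀ k, 3 / 5 * C.t k ≤ τ) (ht : ∀ k, 7 / 5 * C.t k ≤ t) (k : ℕ) :
    FutureWedge τ t (C.t k) (C.e k) := by
  refine mem_futureRegion (isClosed_setOf_futureWedge τ t) (fun k => ⟨2 / 5 * C.t k, ?_, ?_⟩)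
    (fun k e he => ?_) k
  · rw [abs_of_nonneg (by linarith [C.t_pos k])]
    linarith [C.t_lt_half k]
  · exact ⟨by linarith [C.t_pos k], by linarith [C.t_pos k], by linarith [hτ k],
      by linarith [ht k]⟩
  · exact he.step hw (C.t_pos k) (C.t_pos (k + 1)) (C.t_lt_half (k + 1))
      (t_mul_a_sub_le k) (ho k) (hm k)

end SignedExpansion

section Nonvertex

variable {c ξ ζ δ δ' : ℝ} {a : ℤ}

lemma abs_mul_le_add_of_mul_eq {A b B l : ℤ} (hl : |l| ≤ 1) (hab : a * b = A + B + l) :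
    |(b : ℝ)| * (a + ζ + ξ) ≤ |A + ξ * b + δ| + |B + ζ * b + δ'| + |δ| + |δ'| + 1 := by
  have hlR : |(l : ℝ)| ≤ 1 := by exact_mod_cast hl
  have habR : (a : ℝ) * b = A + B + l := by exact_mod_cast hab
  have hsum : (b : ℝ) * (a + ζ + ξ) = (A + ξ * b + δ) + (B + ζ * b + δ') + (l - δ - δ') := by
    linear_combination habR
  calc |(b : ℝ)| * (a + ζ + ξ) ≤ |(b : ℝ) * (a + ζ + ξ)| := by
        rw [abs_mul]
        exact mul_le_mul_of_nonneg_left (le_abs_self _) (abs_nonneg _)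
    _ ≤ |A + ξ * b + δ| + |B + ζ * b + δ'| + |(l : ℝ) - δ - δ'| := by
        rw [hsum]
        exact abs_add_three _ _ _
    _ ≤ _ := by linarith [abs_sub ((l : ℝ) - δ) δ', abs_sub (l : ℝ) δ]

lemma abs_sub_mul_abs_sub_abs_le (u v ξ δ : ℝ) :
    |u| - |ξ| * |v| - |δ| ≤ |u + ξ * v + δ| := by
  rw [← abs_mul]
  have hu : u = u + ξ * v + δ - ξ * v - δ := by ring
  have htri : |u| ≤ |u + ξ * v + δ| + |ξ * v| + |δ| := by
    conv_lhs => rw [hu]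
    linarith [abs_sub (u + ξ * v + δ - ξ * v) δ, abs_sub (u + ξ * v + δ) (ξ * v)]
  linarith

lemma nonvertexBound_of_forall (hS : 0 ≤ a + ζ + ξ) (hξ : |ξ| ≤ 1) (hζ : |ζ| ≤ 1)
    (h₁ : ∀ P Q : ℝ, a + ζ + ξ ≤ P + Q + |δ| + |δ'| + 1 → 3 - |ξ| - |δ| ≤ P →
      3 - |ζ| - |δ'| ≤ Q → c * (a + ζ + ξ) ≤ P * Q)
    (h₃ : ∀ P Q : ℝ, 3 * (a + ζ + ξ) ≤ P + Q + |δ| + |δ'| + 1 → 3 * (1 - |ξ|) - |δ| ≤ P →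
      3 * (1 - |ζ|) - |δ'| ≤ Q → c * (a + ζ + ξ) ≤ P * Q) :
    NonvertexBound c a ξ ζ δ δ' := by
  intro A b B l hl hab hb hbA hbB hA hB
  have hbA' : |(b : ℝ)| ≤ |(A : ℝ)| := by exact_mod_cast hbA
  have hbB' : |(b : ℝ)| ≤ |(B : ℝ)| := by exact_mod_cast hbB
  have hA' : 3 ≤ |(A : ℝ)| := by exact_mod_cast hA
  have hB' : 3 ≤ |(B : ℝ)| := by exact_mod_cast hB
  have hsum := abs_mul_le_add_of_mul_eq (ξ := ξ) (ζ := ζ) (δ := δ) (δ' := δ') hl hab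
  have hP := abs_sub_mul_abs_sub_abs_le A b ξ δ
  have hQ := abs_sub_mul_abs_sub_abs_le B b ζ δ'
  rcases eq_or_ne |b| 1 with hb1 | hb1
  · have hb1' : |(b : ℝ)| = 1 := by exact_mod_cast hb1
    rw [hb1'] at hsum hP hQ
    exact h₁ _ _ (by linarith) (by linarith) (by linarith)
  · have hb3 : 3 ≤ |(b : ℝ)| := by exact_mod_cast three_le_abs_of_odd hb hb1
    exact h₃ _ _ (by nlinarith) (by nlinarith) (by nlinarith)

lemma nonvertexBound_of_le_one_fifth (hc : c ≤ 1 / 5) (ha : 2 ≤ a) (hξ : |ξ| ≤ 5 / 8)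
    (hζ : |ζ| ≤ 1 / 2) (hδ : |δ| ≤ 45 / 100) (hδ' : |δ'| ≤ 4 / 10) (h₁ : |ξ| + |δ| ≤ 1)
    (h₃ : 3 * |ξ| + |δ| ≤ 22 / 10) : NonvertexBound c a ξ ζ δ δ' := by
  have haR : (2 : ℝ) ≤ a := by exact_mod_cast ha
  have hS : 0 ≤ a + ζ + ξ := by linarith [neg_abs_le ξ, neg_abs_le ζ]
  have hcS : c * (a + ζ + ξ) ≤ 1 / 5 * (a + ζ + ξ) := mul_le_mul_of_nonneg_right hc hS
  refine nonvertexBound_of_forall hS (by linarith) (by linarith) (fun P Q hPQ hP hQ => ?_)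
    fun P Q hPQ hP hQ => ?_
  · have hP2 : 2 ≤ P := by linarith
    have hQ2 : 2 ≤ Q := by linarith
    nlinarith [mul_nonneg (sub_nonneg.2 hP2) (sub_nonneg.2 hQ2)]
  · have hP' : 8 / 10 ≤ P := by linarith
    have hQ' : 11 / 10 ≤ Q := by linarith
    nlinarith [mul_nonneg (sub_nonneg.2 hP') (sub_nonneg.2 hQ')]

lemma nonvertexBound_of_four_le {R : ℝ} (hR : 4 ≤ R) (haR : R ≤ a) (hc : c ≤ 1 - 2 / R)
    (hξ : |ξ| ≤ 3 / 10) (hζ : |ζ| ≤ 3 / 10) (hδ : |δ| ≤ 1 / 4) (hδ' : |δ'| ≤ 22 / 100) :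
    NonvertexBound c a ξ ζ δ δ' := by
  have hS : R - 6 / 10 ≤ a + ζ + ξ := by linarith [neg_abs_le ξ, neg_abs_le ζ]
  have hcS : c * (a + ζ + ξ) ≤ (a + ζ + ξ) - 17 / 10 := by
    have hle : c * (a + ζ + ξ) ≤ (1 - 2 / R) * (a + ζ + ξ) :=
      mul_le_mul_of_nonneg_right hc (by linarith)
    have hge : 17 / 10 ≤ 2 / R * (a + ζ + ξ) := by
      rw [div_mul_eq_mul_div, le_div_iff₀ (by linarith)]
      linarith
    linarith
  refine nonvertexBound_of_forall (by linarith) (by linarith) (by linarith)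
    (fun P Q hPQ hP hQ => hcS.trans ?_) fun P Q hPQ hP hQ => hcS.trans ?_
  · have hP' : 244 / 100 ≤ P := by linarith
    have hQ' : 244 / 100 ≤ Q := by linarith
    nlinarith [mul_nonneg (sub_nonneg.2 hP') (sub_nonneg.2 hQ')]
  · have hP' : 184 / 100 ≤ P := by linarith
    have hQ' : 184 / 100 ≤ Q := by linarith
    nlinarith [mul_nonneg (sub_nonneg.2 hP') (sub_nonneg.2 hQ')]

end Nonvertex

/-! ### Partial quotients at least four -/

/-- The region of pairs `(x, D)` confining a past when the partial quotients are at least four. -/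
structure PastWedge (X Δ κ K x D : ℝ) : Prop where
  nonneg : 0 ≤ x
  le : x ≤ X
  neg_mul_le : -((1 + Δ) * x) ≤ D
  le_mul : D ≤ Δ * x
  neg_le : -Δ ≤ D
  add_le : x + D ≤ κ
  sub_le : x - D ≤ K

/-- The relations that make `PastWedge X Δ κ K` invariant under the steps with partial quotients at
least `R`, at least `o` if odd and at least `m` if even; `(w, -Δ)` is a corner of the wedge. -/
structure IsInvariantPastWedge (R X Δ κ K w o m : ℝ) : Prop where
  four_le : 4 ≤ R
  X_pos : 0 < X
  X_le : X ≤ 29 / 100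
  X_mul : X * (R - 1 / 2) = 1
  Δ_pos : 0 < Δ
  Δ_le : Δ ≤ 1 / 4
  Δ_mul : Δ * o = 1 + Δ
  w_mul : w * (1 + Δ) = Δ
  κ_pos : 0 < κ
  κ_le_one : κ ≤ 1
  κ_mul : κ * (m + w) = 1 + Δ
  K_pos : 0 < K
  K_le_one : K ≤ 1
  K_mul : K * (o + w) = 2 + Δ
  odd_add : Δ ≤ κ * (o - X)
  odd_sub : (K + Δ) * κ ≤ (K * o - 2) * (1 + Δ)
  even_add : (Δ + κ) * X ≤ κ * m - 1
  even_sub : 1 + Δ ≤ K * (m - X)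

lemma ratioStep_mul_le {a ε : ℤ} {x L B : ℝ} (hpos : 0 < (a : ℝ) + ε * x)
    (h : L ≤ B * (a + ε * x)) : ratioStep a ε x * L ≤ B := by
  rw [ratioStep, one_div_mul_eq_div]
  exact (div_le_iff₀ hpos).2 h

section PastWedge

variable {R X Δ κ K w o m x D : ℝ} {a ε : ℤ}

-- It suffices to check this at the corner `(w, -Δ)`.
lemma PastWedge.neg_sub_mul_le (h : PastWedge X Δ κ K x D)
    (hw : IsInvariantPastWedge R X Δ κ K w o m) {q : ℝ} (hq0 : 0 ≤ q) (hq1 : q ≤ 1) :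
    -D - q * x ≤ Δ - q * w := by
  have hΔ := hw.Δ_pos
  refine le_of_mul_le_mul_right (a := 1 + Δ) ?_ (by linarith)
  have hmul := mul_le_mul_of_nonneg_left h.neg_mul_le hq0
  have hneg := mul_le_mul_of_nonneg_left h.neg_le (by linarith : 0 ≤ 1 + Δ - q)
  linear_combination hmul + hneg + q * hw.w_mul

lemma PastWedge.abs_le (h : PastWedge X Δ κ K x D) (hΔ : 0 ≤ Δ) (hX : X ≤ 1) : |D| ≤ Δ :=
  abs_le'.2 ⟨h.le_mul.trans (mul_le_of_le_one_right hΔ (h.le.trans hX)), by linarith [h.neg_le]⟩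

lemma PastWedge.neg_le_ε_mul (h : PastWedge X Δ κ K x D) (hε : |ε| = 1) : -X ≤ ε * x := by
  have habs : |(ε : ℝ) * x| ≤ X := by
    rw [abs_mul, abs_intCast_eq_one hε, one_mul, abs_of_nonneg h.nonneg]
    exact h.le
  exact (_root_.abs_le.1 habs).1

lemma PastWedge.step_odd (h : PastWedge X Δ κ K x D)
    (hw : IsInvariantPastWedge R X Δ κ K w o m) (hε : |ε| = 1) (ho : o ≤ a)
    (hpos : 0 < (a : ℝ) + ε * x) :
    ratioStep a ε x * (1 - ε * D) ≤ Δ ∧ ratioStep a ε x * (ε * D) ≤ κ ∧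
      ratioStep a ε x * (2 - ε * D) ≤ K := by
  have hΔ0 := hw.Δ_pos
  have hκ0 := hw.κ_pos
  have hK0 := hw.K_pos
  have hX1 := hw.X_le
  have hεx := h.neg_le_ε_mul hε
  have hD := h.abs_le hΔ0.le (by linarith)
  have hεD : ε * D ≤ Δ := by
    refine (le_abs_self _).trans ?_
    rwa [abs_mul, abs_intCast_eq_one hε, one_mul]
  refine ⟨ratioStep_mul_le hpos ?_, ratioStep_mul_le hpos ?_, ratioStep_mul_le hpos ?_⟩
  · refine le_trans ?_ (mul_le_mul_of_nonneg_left (add_le_add_left ho _) hΔ0.le)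
    have hΔx := mul_le_mul_of_nonneg_left h.le hΔ0.le
    have hΔx0 := mul_nonneg hΔ0.le h.nonneg
    have hΔX := mul_le_mul_of_nonneg_left hX1 hΔ0.le
    rcases (abs_eq zero_le_one).1 hε with rfl | rfl <;> push_cast <;>
      linarith [hw.Δ_mul, h.neg_le, h.le_mul]
  · exact hεD.trans (hw.odd_add.trans (mul_le_mul_of_nonneg_left (by linarith) hκ0.le))
  · refine le_trans ?_ (mul_le_mul_of_nonneg_left (add_le_add_left ho _) hK0.le)
    rcases (abs_eq zero_le_one).1 hε with rfl | rfl <;> push_cast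
    · linarith [h.neg_sub_mul_le hw hK0.le hw.K_le_one, hw.K_mul]
    · have hsub : (D + K * x) * (1 + Δ) ≤ (K * o - 2) * (1 + Δ) := by
        have := mul_le_mul_of_nonneg_left h.add_le (by linarith : 0 ≤ K + Δ)
        have := mul_le_mul_of_nonneg_left h.le_mul (by linarith [hw.K_le_one] : 0 ≤ 1 - K)
        linarith [hw.odd_sub]
      linarith [le_of_mul_le_mul_right hsub (by linarith)]

lemma PastWedge.step_even (h : PastWedge X Δ κ K x D)
    (hw : IsInvariantPastWedge R X Δ κ K w o m) (hε : |ε| = 1) (hm : m ≤ a)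
    (hpos : 0 < (a : ℝ) + ε * x) :
    ratioStep a ε x * (1 - ε * D) ≤ κ ∧ ratioStep a ε x * (1 + ε * D) ≤ K := by
  have hΔ0 := hw.Δ_pos
  have hκ0 := hw.κ_pos
  have hK0 := hw.K_pos
  have hX1 := hw.X_le
  have hεx := h.neg_le_ε_mul hε
  have hD := h.abs_le hΔ0.le (by linarith)
  have hεD : ε * D ≤ Δ := by
    refine (le_abs_self _).trans ?_
    rwa [abs_mul, abs_intCast_eq_one hε, one_mul]
  refine ⟨ratioStep_mul_le hpos ?_, ratioStep_mul_le hpos ?_⟩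
  · refine le_trans ?_ (mul_le_mul_of_nonneg_left (add_le_add_left hm _) hκ0.le)
    rcases (abs_eq zero_le_one).1 hε with rfl | rfl <;> push_cast
    · linarith [h.neg_sub_mul_le hw hκ0.le hw.κ_le_one, hw.κ_mul]
    · have := mul_le_mul_of_nonneg_left h.le (by linarith : 0 ≤ Δ + κ)
      linarith [h.le_mul, hw.even_add]
  · have := mul_le_mul_of_nonneg_left (by linarith : m - X ≤ a + ε * x) hK0.le
    linarith [hw.even_sub]

lemma PastWedge.step (h : PastWedge X Δ κ K x D)
    (hw : IsInvariantPastWedge R X Δ κ K w o m) (hε : |ε| = 1) (ha : R ≤ a)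
    (ho : Odd a → o ≤ a) (hm : ¬Odd a → m ≤ a) :
    PastWedge X Δ κ K (ratioStep a ε x) (pastSumStep a ε x D) := by
  have hΔ0 := hw.Δ_pos
  have hX0 := hw.X_pos
  have hX1 := hw.X_le
  have hεx := h.neg_le_ε_mul hε
  have hpos : 0 < (a : ℝ) + ε * x := by linarith [hw.four_le]
  have hεD : |ε * D| ≤ Δ := by
    rw [abs_mul, abs_intCast_eq_one hε, one_mul]
    exact h.abs_le hΔ0.le (by linarith)
  have hp0 : 0 < ratioStep a ε x := one_div_pos.2 hpos
  have hpX : ratioStep a ε x ≤ X := by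
    rw [← mul_one (ratioStep a ε x)]
    exact ratioStep_mul_le hpos
      (hw.X_mul.symm.trans_le (mul_le_mul_of_nonneg_left (by linarith) hX0.le))
  have hlower := mul_le_mul_of_nonneg_left (_root_.abs_le.1 hεD).1 hp0.le
  have hupper := mul_le_mul_of_nonneg_left (_root_.abs_le.1 hεD).2 hp0.le
  unfold pastSumStep
  split_ifs with hodd
  · obtain ⟨hneg, hadd, hsub⟩ := h.step_odd hw hε (ho hodd) hpos
    constructor <;> linarith
  · obtain ⟨hadd, hsub⟩ := h.step_even hw hε (hm hodd) hpos
    have hpΔ := mul_le_mul_of_nonneg_right hpX hΔ0.le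
    constructor <;> nlinarith

end PastWedge

/-- The inequalities giving the bound `c` at every vertex whose past lies in `PastWedge X Δ κ K` and
whose future lies in `FutureWedge τ t`. The `corner` fields are the vertex inequality at corners of
the two wedges, the `past` and `future` fields say that it persists along their edges. -/
structure WedgeVertexInequalities (R X Δ κ K τ t c : ℝ) : Prop where
  c_nonneg : 0 ≤ c
  c_le : c ≤ 1 - 2 / R
  t_le : t ≤ 44 / 100
  add_corner : c * (1 - κ / (1 + Δ) * (t / 2)) ≤ (1 - κ) * (1 - t)
  add_past : c * (1 / (1 + Δ)) * (t / 2) ≤ 1 - t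
  add_future : c * (1 / 2) * (κ / (1 + Δ)) ≤ 1 - κ
  sub_corner : c * (1 - K / (2 + Δ) * τ) ≤ (1 - K) * (1 - τ)
  sub_past : c * (1 / (2 + Δ)) * τ ≤ 1 - τ
  sub_future : c * 1 * (K / (2 + Δ)) ≤ 1 - K
  le_one_sub_K : c ≤ 1 - K
  mul_le_one_sub_κ : c * (1 + X ^ 2) ≤ 1 - κ
  mul_le_one_sub_Δ_mul : c * (1 + X ^ 2) ≤ (1 - Δ * X) * (1 - t)
  mul_le_one_sub_τ : c * (1 + X ^ 2) ≤ 1 - τ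

-- Moving away from the corner `(x₀, y₀)` by slacks `p` and `q` changes both sides by bilinear
-- expressions in `p` and `q`, which are compared coefficientwise.
lemma mul_one_sub_mul_le_of_corner {c A B p q x y x₀ y₀ μ ν : ℝ} (hc : 0 ≤ c) (hμ : 0 ≤ μ)
    (hν : 0 ≤ ν) (hp : 0 ≤ p) (hq : 0 ≤ q) (hx : 0 ≤ x) (hxp : x₀ - μ * p ≤ x)
    (hyq : y₀ - ν * q ≤ y) (hy : 0 ≤ y₀ - ν * q) (hcorner : c * (1 - x₀ * y₀) ≤ A * B)
    (hB : c * μ * y₀ ≤ B) (hA : c * ν * x₀ ≤ A) :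
    c * (1 - x * y) ≤ (A + p) * (B + q) := by
  have hxy : (x₀ - μ * p) * (y₀ - ν * q) ≤ x * y := by gcongr
  have hcxy := mul_le_mul_of_nonneg_left hxy hc
  have hpq : 0 ≤ c * (μ * p * (ν * q)) := by positivity
  linear_combination hcorner + hcxy + hpq + p * hB + q * hA + mul_nonneg hp hq

section VertexBound

variable {R X Δ κ K w o m τ t c x D y e : ℝ}

lemma PastWedge.vertexBound_one (h : PastWedge X Δ κ K x D)
    (hw : IsInvariantPastWedge R X Δ κ K w o m) (hf : FutureWedge τ t y e) (hyX : y ≤ X)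
    (hτ : τ ≤ 1) (hv : WedgeVertexInequalities R X Δ κ K τ t c) :
    VertexBound c x D y e 1 := by
  have hc0 := hv.c_nonneg
  have hX1 := hw.X_le
  have ht1 := hv.t_le
  have hx0 := h.nonneg
  have hy0 : 0 ≤ y := hf.nonneg.trans hf.le
  have hΔX := mul_le_mul_of_nonneg_left h.le hw.Δ_pos.le
  have hDx : D ≤ x := h.le_mul.trans
    (mul_le_of_le_one_left hx0 (by linarith [hw.Δ_le]))
  have hxy0 : 0 ≤ x * y := mul_nonneg hx0 hy0
  have hxy : c * (1 + ((1 : ℤ) : ℝ) * x * y) ≤ c * (1 + X ^ 2) := by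
    rw [Int.cast_one, one_mul, sq]
    have hX0 := hw.X_pos.le
    gcongr
    exact h.le
  obtain ⟨hf0, hf1, hf2, hf3⟩ := hf
  obtain ⟨-, hxX, h2, -, h4, h5, h6⟩ := h
  refine ⟨?_, hxy.trans <| hv.mul_le_one_sub_κ.trans ?_,
    hxy.trans <| hv.mul_le_one_sub_Δ_mul.trans ?_, hxy.trans <| hv.mul_le_one_sub_τ.trans ?_⟩
  all_goals push_cast
  · have hxy1 : x * y ≤ y := mul_le_of_le_one_left hy0 (by linarith)
    refine mul_le_mul ?_ ?_ ?_ ?_ <;> linarith [hv.le_one_sub_K, hw.K_le_one]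
  · rw [← mul_one (1 - κ)]
    refine mul_le_mul ?_ ?_ ?_ ?_ <;> linarith [hw.κ_le_one]
  · refine mul_le_mul ?_ ?_ ?_ ?_ <;> linarith [hw.Δ_le]
  · rw [← one_mul (1 - τ)]
    refine mul_le_mul ?_ ?_ ?_ ?_ <;> linarith

lemma PastWedge.vertexBound_neg_one (h : PastWedge X Δ κ K x D)
    (hw : IsInvariantPastWedge R X Δ κ K w o m) (hf : FutureWedge τ t y e)
    (hv : WedgeVertexInequalities R X Δ κ K τ t c) :
    VertexBound c x D y e (-1) := by
  have hc0 := hv.c_nonneg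
  have hΔ0 := hw.Δ_pos
  have ht1 := hv.t_le
  have hx0 := h.nonneg
  have hy0 : 0 ≤ y := hf.nonneg.trans hf.le
  have hxX := h.le
  have hΔX := mul_le_mul_of_nonneg_left hxX hΔ0.le
  have hDx : D ≤ x := h.le_mul.trans (mul_le_of_le_one_left hx0 (by linarith [hw.Δ_le]))
  have hcxy : c * (1 + ((-1 : ℤ) : ℝ) * x * y) ≤ c := by
    refine mul_le_of_le_one_right hc0 ?_
    push_cast
    linarith [mul_nonneg hx0 hy0]
  have hcX : c ≤ c * (1 + X ^ 2) := le_mul_of_one_le_right hc0 (by linarith [sq_nonneg X])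
  have hc1 : c ≤ 1 := by linarith [hv.mul_le_one_sub_κ, hw.κ_pos]
  obtain ⟨hf0, hf1, hf2, hf3⟩ := hf
  obtain ⟨-, -, h2, h3, h4, h5, h6⟩ := h
  refine ⟨?_, ?_, hcxy.trans <| hcX.trans <| hv.mul_le_one_sub_Δ_mul.trans ?_,
    hcxy.trans <| hc1.trans ?_⟩
  · have hK : 0 < 2 + Δ := by linarith
    have := mul_one_sub_mul_le_of_corner (p := K - (x - D)) (q := τ - (y - e)) (x := x) (y := y)
      hc0 (one_div_nonneg.2 hK.le) zero_le_one (by linarith) (by linarith) hx0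
      (by rw [div_mul_eq_mul_div, ← sub_div, div_le_iff₀ hK]; linarith) (by linarith)
      (by linarith) hv.sub_corner hv.sub_past hv.sub_future
    push_cast
    linear_combination this
  · have hκ : 0 < 1 + Δ := by linarith
    have := mul_one_sub_mul_le_of_corner (p := κ - (x + D)) (q := t - (y + e)) (x := x) (y := y)
      hc0 (one_div_nonneg.2 hκ.le) one_half_pos.le (by linarith) (by linarith) hx0
      (by rw [div_mul_eq_mul_div, ← sub_div, div_le_iff₀ hκ]; linarith) (by linarith)
      (by linarith) hv.add_corner hv.add_past hv.add_future
    push_cast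
    linear_combination this
  · push_cast
    refine mul_le_mul ?_ ?_ ?_ ?_ <;> linarith [hw.Δ_le]
  · rw [← one_mul (1 : ℝ)]
    push_cast
    refine mul_le_mul ?_ ?_ ?_ ?_ <;> linarith

end VertexBound

theorem SignedExpansion.oddFormBound_of_wedges {C : SignedExpansion} {R : ℤ}
    {X Δ κ K w o m τ t c : ℝ} (hR : ∀ k, R ≤ C.a k) (ho : ∀ a : ℤ, R ≤ a → Odd a → o ≤ a)
    (hm : ∀ a : ℤ, R ≤ a → ¬Odd a → m ≤ a) (hw : IsInvariantPastWedge R X Δ κ K w o m)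
    (hf : IsInvariantWedge o m τ t) (hv : WedgeVertexInequalities R X Δ κ K τ t c)
    (hτ : 3 / 5 * X ≤ τ) (ht : 7 / 5 * X ≤ t) : C.OddFormBound 0 c := by
  have hR4 := hw.four_le
  have hX0 := hw.X_pos
  have hX1 := hw.X_le
  have hle {y : ℝ} (hy : y * (R - 1 / 2) ≤ 1) : y ≤ X :=
    le_of_mul_le_mul_right (hy.trans hw.X_mul.ge) (by linarith)
  have hq : IsPastRegion R fun x D _ => PastWedge X Δ κ K x D :=
    { zero_mem := fun _ _ => ⟨le_rfl, hX0.le, by simp, by simp, by linarith [hw.Δ_pos],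
        by linarith [hw.κ_pos], by linarith [hw.K_pos]⟩
      step_mem := fun h hε _ ha _ =>
        h.step hw hε (by exact_mod_cast ha) (ho _ ha) (hm _ ha)
      nonneg := fun h => h.nonneg
      lt_one := fun h => h.le.trans_lt (by linarith) }
  refine C.oddFormBound_of_regions hq hR
    (C.mem_futureWedge hf (fun k => ho _ (hR k)) (fun k => hm _ (hR k)) (fun k => ?_) fun k => ?_)
    ?_ ?_
  · linarith [hle (C.t_mul_le hR k)]
  · linarith [hle (C.t_mul_le hR k)]
  · intro x D y e ε hε h _ _ hy hfut
    rcases (abs_eq zero_le_one).1 hε with rfl | rfl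
    · exact h.vertexBound_one hw hfut (hle hy) hf.τ_le_one hv
    · exact h.vertexBound_neg_one hw hfut hv
  · intro x D y e ξ ζ δ δ' _ a h _ hy hfut ha hξ hζ hδ hδ'
    have hyX := hle hy
    refine nonvertexBound_of_four_le hR4 (by exact_mod_cast ha) hv.c_le ?_ ?_ ?_ ?_
    · linarith [h.le]
    · linarith
    · linarith [h.abs_le hw.Δ_pos.le (by linarith), hw.Δ_le]
    · rw [hδ', abs_of_nonneg hfut.nonneg]
      linarith [hfut.le, hfut.add_le, hv.t_le]

-- With `{o, m} = {R, R + 1}`, the parameters solve the equality cases of the invariance relations: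
-- `Δ = 1 / (o - 1)`, `w = 1 / o`, `κ = (1 + Δ) / (m + w)`, `K = (2 + Δ) / (o + w)`,
-- `τ = (m - 1) / (m ^ 2 - m - 1)` and `t = 2 / (o - τ)`.
set_option maxHeartbeats 2000000 in
-- Clearing denominators leaves polynomials in `u`, some of high degree, with nonnegative
-- coefficients.
lemma exists_wedges_even {R : ℝ} (hR : 4 ≤ R) : ∃ X Δ κ K w τ t : ℝ,
    IsInvariantPastWedge R X Δ κ K w (R + 1) R ∧ IsInvariantWedge (R + 1) R τ t ∧
      WedgeVertexInequalities R X Δ κ K τ t (1 - 3 / R + 4 / R ^ 2 - 7 / R ^ 3) ∧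
      3 / 5 * X ≤ τ ∧ 7 / 5 * X ≤ t := by
  obtain ⟨u, hu, rfl⟩ : ∃ u : ℝ, 0 ≤ u ∧ R = 4 + u := ⟨R - 4, by linarith, by ring⟩
  have hc : 1 - 3 / (4 + u) + 4 / (4 + u) ^ 2 - 7 / (4 + u) ^ 3 =
      (u ^ 3 + 9 * u ^ 2 + 28 * u + 25) / (4 + u) ^ 3 := by field_simp; ring
  rw [hc]
  refine ⟨2 / (2 * u + 7), 1 / (4 + u), (5 + u) ^ 2 / ((4 + u) * (u ^ 2 + 9 * u + 21)),
    (2 * u + 9) * (5 + u) / ((4 + u) * (u ^ 2 + 10 * u + 26)), 1 / (5 + u),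
    (3 + u) / (u ^ 2 + 7 * u + 11),
    2 * ((u ^ 2 + 7 * u + 11) / ((4 + u) * (u ^ 2 + 8 * u + 13))), ?_, ?_, ?_, ?_, ?_⟩
  any_goals constructor
  all_goals first
    | positivity
    | linarith
    | (field_simp; done)
    | (field_simp; ring; done)
    | (rw [← sub_nonneg]; field_simp; ring_nf; positivity)

set_option maxHeartbeats 2000000 in
-- As above, the cleared inequalities have high degree in `u`.
lemma exists_wedges_odd {R : ℝ} (hR : 5 ≤ R) : ∃ X Δ κ K w τ t : ℝ,
    IsInvariantPastWedge R X Δ κ K w R (R + 1) ∧ IsInvariantWedge R (R + 1) τ t ∧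
      WedgeVertexInequalities R X Δ κ K τ t (1 - 3 / R + 3 / R ^ 2 - 6 / R ^ 3) ∧
      3 / 5 * X ≤ τ ∧ 7 / 5 * X ≤ t := by
  obtain ⟨u, hu, rfl⟩ : ∃ u : ℝ, 0 ≤ u ∧ R = 5 + u := ⟨R - 5, by linarith, by ring⟩
  have hc : 1 - 3 / (5 + u) + 3 / (5 + u) ^ 2 - 6 / (5 + u) ^ 3 =
      (u ^ 3 + 12 * u ^ 2 + 48 * u + 59) / (5 + u) ^ 3 := by field_simp; ring
  rw [hc]
  refine ⟨2 / (2 * u + 9), 1 / (4 + u), (5 + u) ^ 2 / ((4 + u) * (u ^ 2 + 11 * u + 31)),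
    (2 * u + 9) * (5 + u) / ((4 + u) * (u ^ 2 + 10 * u + 26)), 1 / (5 + u),
    (5 + u) / (u ^ 2 + 11 * u + 29),
    2 * ((u ^ 2 + 11 * u + 29) / ((5 + u) * (7 + u) * (4 + u))), ?_, ?_, ?_, ?_, ?_⟩
  any_goals constructor
  all_goals first
    | positivity
    | linarith
    | (field_simp; done)
    | (field_simp; ring; done)
    | (rw [← sub_nonneg]; field_simp; ring_nf; positivity)

theorem SignedExpansion.oddFormBound_even {C : SignedExpansion} {R : ℤ} (hR4 : 4 ≤ R)
    (heven : Even R) (hR : ∀ k, R ≤ C.a k) :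
    C.OddFormBound 0 (1 - 3 / R + 4 / (R : ℝ) ^ 2 - 7 / (R : ℝ) ^ 3) := by
  obtain ⟨X, Δ, κ, K, w, τ, t, hw, hf, hv, hτ, ht⟩ :=
    exists_wedges_even (R := R) (by exact_mod_cast hR4)
  refine oddFormBound_of_wedges hR (fun a ha hodd => ?_) (fun a ha _ => ?_) hw hf hv hτ ht
  · have hle : R + 1 ≤ a := lt_of_le_of_ne ha fun h => Int.not_odd_iff_even.2 heven (h ▸ hodd)
    exact_mod_cast hle
  · exact_mod_cast ha

theorem SignedExpansion.oddFormBound_odd {C : SignedExpansion} {R : ℤ} (hR5 : 5 ≤ R)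
    (hodd : Odd R) (hR : ∀ k, R ≤ C.a k) :
    C.OddFormBound 0 (1 - 3 / R + 3 / (R : ℝ) ^ 2 - 6 / (R : ℝ) ^ 3) := by
  obtain ⟨X, Δ, κ, K, w, τ, t, hw, hf, hv, hτ, ht⟩ :=
    exists_wedges_odd (R := R) (by exact_mod_cast hR5)
  refine oddFormBound_of_wedges hR (fun a ha _ => ?_) (fun a ha heven => ?_) hw hf hv hτ ht
  · exact_mod_cast ha
  · have hle : R + 1 ≤ a := lt_of_le_of_ne ha fun h => heven (h ▸ hodd)
    exact_mod_cast hle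

/-! ### Partial quotients at least two -/

/-- The constant `θ₁ = (√13 - 3) / 2`, the positive root of `θ ^ 2 + 3 * θ = 1`. -/
noncomputable def θ₁ : ℝ := (Real.sqrt 13 - 3) / 2

lemma θ₁_sq : θ₁ ^ 2 = 1 - 3 * θ₁ := by
  unfold θ₁
  linear_combination (1 / 4) * Real.sq_sqrt (show (0 : ℝ) ≤ 13 by norm_num)

lemma le_θ₁ : 3027 / 10000 ≤ θ₁ := by
  have : (36054 / 10000 : ℝ) ≤ Real.sqrt 13 := Real.le_sqrt_of_sq_le (by norm_num)
  unfold θ₁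
  linarith

lemma θ₁_le : θ₁ ≤ 3028 / 10000 := by
  have : Real.sqrt 13 ≤ 36056 / 10000 := Real.sqrt_le_iff.2 ⟨by norm_num, by norm_num⟩
  unfold θ₁
  linarith

/-- The region of pairs `(x, D)` confining a past which is empty or ends with a partial quotient at
least three. -/
structure PastAfterThree (x D : ℝ) : Prop where
  nonneg : 0 ≤ x
  le : x ≤ 2 / 5
  neg_mul_le : -(3 * D) ≤ (4 + θ₁) * x
  le_mul : 3 * D ≤ (1 + θ₁) * x
  neg_le : -(3 * D) ≤ 1 + θ₁
  add_le : 3 * (x + D) ≤ 1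
  neg_le_mul : -(9 * D) ≤ (5 + 2 * θ₁) * (1 - x)
  sub_le : (8 + θ₁) * (x - D) ≤ 6 + θ₁

/-- The region of pairs `(x, D)` confining a past which ends with a partial quotient two. -/
structure PastAfterTwo (x D : ℝ) : Prop where
  ge : 19 / 50 ≤ x
  le : x ≤ 5 / 8
  neg_mul_le : -(3 * D) ≤ (1 + θ₁) * x
  le_mul : 3 * D ≤ (1 + θ₁) * x
  add_le : x + D ≤ 18 / 25
  sub_le : (13 + 2 * θ₁) * (x - D) ≤ 11 + 2 * θ₁

/-- A region for the signed pasts `(ε x, ε D)`, from which every step leads to `PastAfterThree` or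
`PastAfterTwo`. The last two fields serve the steps with partial quotient two, the four before them
those with an odd or even partial quotient at least three. -/
structure SignedPast (z w : ℝ) : Prop where
  z_ge : -(2 / 5) ≤ z
  z_le : z ≤ 5 / 8
  w_ge : -(1 + θ₁) ≤ 3 * w
  w_le : 3 * w ≤ 1 + θ₁
  one_sub_le : 3 * (1 - w) ≤ (1 + θ₁) * (3 + z)
  one_sub_add_le : 9 * (1 - w) + (5 + 2 * θ₁) ≤ (5 + 2 * θ₁) * (3 + z)
  two_sub_le : (8 + θ₁) * (2 - w) ≤ (6 + θ₁) * (3 + z)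
  even_le : 3 * (1 - w) ≤ 4 + z
  two_one_sub_le : 1 - w ≤ 18 / 25 * (2 + z)
  two_one_add_le : (13 + 2 * θ₁) * (1 + w) ≤ (11 + 2 * θ₁) * (2 + z)

section LowPast

variable {x D : ℝ} {a ε : ℤ}

lemma PastAfterThree.zero : PastAfterThree 0 0 := by
  have hlo := le_θ₁
  constructor <;> linarith

lemma PastAfterThree.abs_le (h : PastAfterThree x D) : |D| ≤ 4343 / 10000 :=
  abs_le'.2 ⟨by linarith [h.add_le, h.nonneg], by linarith [h.neg_le, θ₁_le]⟩

lemma PastAfterTwo.abs_le (h : PastAfterTwo x D) : |D| ≤ 28 / 100 := by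
  have hx : 0 ≤ x := by linarith [h.ge]
  have hθx := mul_le_mul_of_nonneg_right θ₁_le hx
  exact abs_le'.2 ⟨by linarith [h.le, h.le_mul], by linarith [h.le, h.neg_mul_le]⟩

lemma PastAfterThree.signedPast (h : PastAfterThree x D) : SignedPast x D := by
  have hsq := θ₁_sq
  have hlo := le_θ₁
  have hhi := θ₁_le
  obtain ⟨h0, h1, h2, -, h4, h5, -, -⟩ := h
  have hmul (u : ℝ) (hu : 0 ≤ u) := mul_le_mul_of_nonneg_left h2 hu
  have hneg (u : ℝ) (hu : 0 ≤ u) := mul_le_mul_of_nonneg_left h4 hu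
  have hsqx : θ₁ ^ 2 * x = x - 3 * (θ₁ * x) := by rw [hsq]; ring
  refine ⟨by linarith, by linarith, by linarith, by linarith, ?_, ?_, ?_, ?_, by linarith, ?_⟩
  · linarith [hmul θ₁ (by linarith), hneg (1 - θ₁) (by linarith)]
  · linarith [hmul (1 + θ₁) (by linarith), hneg (2 - θ₁) (by linarith)]
  · linarith [hmul ((5 - 2 * θ₁) / 3) (by linarith), hneg (1 + θ₁) (by linarith)]
  · linarith [hmul ((1 - θ₁) / 3) (by linarith), hneg ((2 + θ₁) / 3) (by linarith)]
  · linarith [mul_le_mul_of_nonneg_left (by linarith : D ≤ 1 / 3)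
      (by linarith : 0 ≤ 13 + 2 * θ₁)]

lemma PastAfterThree.signedPast_neg (h : PastAfterThree x D) : SignedPast (-x) (-D) := by
  have hsq := θ₁_sq
  have hlo := le_θ₁
  have hhi := θ₁_le
  obtain ⟨h0, h1, -, h3, h4, h5, h6, h7⟩ := h
  have hθx : θ₁ * x ≤ 3028 / 10000 * x := by gcongr
  have hadd (u : ℝ) (hu : 0 ≤ u) := mul_le_mul_of_nonneg_left h5 hu
  have hmul (u : ℝ) (hu : 0 ≤ u) := mul_le_mul_of_nonneg_left h3 hu
  have hsqx : θ₁ ^ 2 * x = x - 3 * (θ₁ * x) := by rw [hsq]; ring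
  refine ⟨by linarith, by linarith, by linarith, by linarith, by linarith, ?_, ?_, by linarith,
    by linarith, ?_⟩
  · linarith [hadd (1 + 4 * θ₁) (by linarith), hmul (2 - 4 * θ₁) (by linarith)]
  · linarith [hadd (2 + θ₁) (by linarith), hmul ((2 - 2 * θ₁) / 3) (by linarith)]
  · linarith [mul_le_mul_of_nonneg_left h6 (by linarith : 0 ≤ (5 + θ₁) / 9)]

lemma PastAfterThree.signedPast_mul (h : PastAfterThree x D) (hε : |ε| = 1) :
    SignedPast (ε * x) (ε * D) := by
  rcases (abs_eq zero_le_one).1 hε with rfl | rfl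
  · simpa using h.signedPast
  · simpa using h.signedPast_neg

lemma PastAfterTwo.signedPast (h : PastAfterTwo x D) : SignedPast x D := by
  have hlo := le_θ₁
  have hhi := θ₁_le
  have hD := _root_.abs_le.1 h.abs_le
  obtain ⟨h0, h1, h2, -, -, -⟩ := h
  have hθx : θ₁ * x ≤ 3028 / 10000 * x := mul_le_mul_of_nonneg_right hhi (by linarith)
  have hθD := mul_le_mul_of_nonneg_left hD.2 (by linarith : 0 ≤ θ₁)
  have hθD' := mul_le_mul_of_nonneg_left hD.1 (by linarith : 0 ≤ θ₁)
  constructor <;> linarith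

lemma SignedPast.denom_pos (h : SignedPast (ε * x) (ε * D)) (ha : 2 ≤ a) :
    0 < (a : ℝ) + ε * x := by
  have haR : (2 : ℝ) ≤ a := by exact_mod_cast ha
  linarith [h.z_ge]

lemma four_le_of_three_le_of_not_odd (ha : 3 ≤ a) (hodd : ¬Odd a) : 4 ≤ a :=
  lt_of_le_of_ne ha fun h => hodd (h ▸ (by decide : Odd (3 : ℤ)))

lemma SignedPast.step_odd (h : SignedPast (ε * x) (ε * D)) (ha : 3 ≤ a) (hodd : Odd a) :
    PastAfterThree (ratioStep a ε x) (pastSumStep a ε x D) := by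
  have hlo := le_θ₁
  have hhi := θ₁_le
  have haR : (3 : ℝ) ≤ a := by exact_mod_cast ha
  have hpos := h.denom_pos (by omega : 2 ≤ a)
  have hp0 : 0 < ratioStep a ε x := one_div_pos.2 hpos
  obtain ⟨z0, -, w0, w1, s1, s2, s3, -, -, -⟩ := h
  have hp := ratioStep_mul_le hpos (L := 1) (B := 2 / 5) (by linarith)
  have hw0 := mul_le_mul_of_nonneg_left w0 hp0.le
  have hw1 := mul_le_mul_of_nonneg_left w1 hp0.le
  have hle {u : ℝ} (hu : 0 ≤ u) : u * (3 + ε * x) ≤ u * (a + ε * x) :=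
    mul_le_mul_of_nonneg_left (by linarith) hu
  have hneg := ratioStep_mul_le hpos (s1.trans (hle (by linarith)))
  have hadd := ratioStep_mul_le hpos (L := 3 * (ε * D)) (B := 1) (by linarith)
  have hnegmul := ratioStep_mul_le hpos (s2.trans (hle (by linarith)))
  have hsub := ratioStep_mul_le hpos (s3.trans (hle (by linarith)))
  rw [pastSumStep, if_pos hodd]
  constructor <;> linarith

lemma SignedPast.step_even (h : SignedPast (ε * x) (ε * D)) (ha : 3 ≤ a) (hodd : ¬Odd a) :
    PastAfterThree (ratioStep a ε x) (pastSumStep a ε x D) := by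
  have hlo := le_θ₁
  have hhi := θ₁_le
  have haR : (4 : ℝ) ≤ a := by exact_mod_cast four_le_of_three_le_of_not_odd ha hodd
  have hpos := h.denom_pos (by omega : 2 ≤ a)
  have hp0 : 0 < ratioStep a ε x := one_div_pos.2 hpos
  obtain ⟨z0, -, w0, w1, -, -, -, s4, -, -⟩ := h
  have hw0 := mul_le_mul_of_nonneg_left w0 hp0.le
  have hw1 := mul_le_mul_of_nonneg_left w1 hp0.le
  have hp := ratioStep_mul_le hpos (L := 1) (B := 5 / 18) (by linarith)
  have hpw := mul_le_mul_of_nonneg_left (by linarith : ε * D ≤ 44 / 100) hp0.le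
  have hadd := ratioStep_mul_le hpos (L := 3 * (1 - ε * D)) (B := 1) (by linarith)
  have hθp := mul_le_mul_of_nonneg_left (by linarith : ratioStep a ε x ≤ 5 / 18)
    (by linarith : 0 ≤ θ₁)
  have hsub := mul_le_mul_of_nonneg_left
    (by linarith : ratioStep a ε x + ratioStep a ε x * (ε * D) ≤ 1 / 2)
    (by linarith : 0 ≤ 8 + θ₁)
  rw [pastSumStep, if_neg hodd]
  constructor <;> linarith

lemma SignedPast.step_two (h : SignedPast (ε * x) (ε * D)) :
    PastAfterTwo (ratioStep 2 ε x) (pastSumStep 2 ε x D) := by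
  have hpos := h.denom_pos le_rfl
  have hp0 : 0 < ratioStep 2 ε x := one_div_pos.2 hpos
  obtain ⟨z0, z1, w0, w1, -, -, -, -, s1, s2⟩ := h
  have hw0 := mul_le_mul_of_nonneg_left w0 hp0.le
  have hw1 := mul_le_mul_of_nonneg_left w1 hp0.le
  have hone : ratioStep 2 ε x * ((2 : ℤ) + ε * x) = 1 := one_div_mul_cancel hpos.ne'
  push_cast at hpos hone
  have hz := mul_le_mul_of_nonneg_left z1 hp0.le
  have hp := ratioStep_mul_le (a := 2) (by exact_mod_cast hpos) (L := 1) (B := 5 / 8)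
    (by push_cast; linarith)
  have hadd := ratioStep_mul_le (a := 2) (by exact_mod_cast hpos) (by exact_mod_cast s1)
  have hsub := ratioStep_mul_le (a := 2) (by exact_mod_cast hpos) (by exact_mod_cast s2)
  rw [pastSumStep, if_neg (by decide)]
  constructor <;> linarith

end LowPast

/-- The region of pasts for arbitrary partial quotients. After a partial quotient two the sign is
`1`, because of the rule `ε (k + 1) = 1` in `SignedExpansion`. -/
def LowPast (x D : ℝ) (ε : ℤ) : Prop := PastAfterThree x D ∨ PastAfterTwo x D ∧ ε = 1

lemma isPastRegion_lowPast : IsPastRegion 2 LowPast where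
  zero_mem _ _ := .inl .zero
  step_mem {x D ε a ε'} h hε _ ha htwo := by
    have hs : SignedPast (ε * x) (ε * D) := by
      rcases h with h | ⟨h, rfl⟩
      · exact h.signedPast_mul hε
      · simpa using h.signedPast
    rcases ha.eq_or_lt with rfl | h3
    · exact .inr ⟨hs.step_two, htwo rfl⟩
    by_cases hodd : Odd a
    · exact .inl (hs.step_odd h3 hodd)
    · exact .inl (hs.step_even h3 hodd)
  nonneg h := by
    rcases h with h | ⟨h, -⟩
    · exact h.nonneg
    · linarith [h.ge]
  lt_one h := by
    rcases h with h | ⟨h, -⟩ <;> linarith [h.le]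

lemma isPastRegion_pastAfterThree : IsPastRegion 3 fun x D _ => PastAfterThree x D where
  zero_mem _ _ := .zero
  step_mem {_ _ _ a _} h hε _ ha _ := by
    have hs := h.signedPast_mul hε
    by_cases hodd : Odd a
    · exact hs.step_odd ha hodd
    · exact hs.step_even ha hodd
  nonneg h := h.nonneg
  lt_one h := by linarith [h.le]

/-- The inequalities by which the regions `PastAfterThree` and `FutureWedge τ t` force the bound `c`
at every cell with a small vertex. The two corner conditions concern the vertices
`((1 - θ₁) / 3, t / 2)` and `((5 - θ₁) / 13, τ)` of these regions. -/
structure LowVertexInequalities (τ t c : ℝ) : Prop where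
  c_nonneg : 0 ≤ c
  c_le : c ≤ 1 / 5
  t_le : t ≤ 4 / 5
  τ_le : τ ≤ 1 / 2
  le_mul : c ≤ 1471 / 2000 * (1 - t)
  add_corner : c * (1 - (1 - θ₁) / 3 * (t / 2)) ≤ (1 - 1 / 3) * (1 - t)
  sub_corner : c * (1 - (5 - θ₁) / 13 * τ) ≤ (1 - (29 + 2 * θ₁) / 39) * (1 - τ)

section LowVertex

variable {c τ t x D y e : ℝ}

lemma PastAfterThree.sub_le_div (h : PastAfterThree x D) : x - D ≤ (29 + 2 * θ₁) / 39 := by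
  have hmul := mul_le_mul_of_nonneg_left h.sub_le
    (by linarith [θ₁_le] : 0 ≤ (5 - θ₁) / 39)
  linear_combination hmul + (x - D - 1) / 39 * θ₁_sq

lemma PastAfterThree.vertexBound_one (h : PastAfterThree x D) (hF : FutureWedge τ t y e)
    (hy : y < 1 / 2) (hv : LowVertexInequalities τ t c) : VertexBound c x D y e 1 := by
  have hhi := θ₁_le
  have hc0 := hv.c_nonneg
  have hc1 := hv.c_le
  have ht1 := hv.t_le
  have hct := hv.le_mul
  have hK := h.sub_le_div
  obtain ⟨h0, h1, h2, h3, h4, h5, -, -⟩ := h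
  obtain ⟨he0, he1, -, hf2⟩ := hF
  have hy0 : 0 ≤ y := he0.trans he1
  have hθx := mul_le_mul_of_nonneg_right hhi h0
  have hxy : x * y ≤ x * (1 / 2) := mul_le_mul_of_nonneg_left hy.le h0
  have hxy0 : 0 ≤ x * y := mul_nonneg h0 hy0
  have hcxy : c * (1 + ((1 : ℤ) : ℝ) * x * y) ≤ c * (1 + x * (1 / 2)) := by
    rw [Int.cast_one, one_mul]
    gcongr
  have hxy' : x * y ≤ y := mul_le_of_le_one_left hy0 (by linarith)
  have hquarter : c * (1 + x * (1 / 2)) ≤ 1 / 4 := by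
    calc c * (1 + x * (1 / 2)) ≤ 1 / 5 * (1 + 2 / 5 * (1 / 2)) := by gcongr
      _ ≤ 1 / 4 := by norm_num
  refine ⟨?_, hcxy.trans (hquarter.trans ?_), hcxy.trans ?_, hcxy.trans (hquarter.trans ?_)⟩
  · push_cast
    rw [one_mul]
    refine mul_le_mul ?_ ?_ ?_ ?_ <;> linarith
  · calc (1 / 4 : ℝ) ≤ (1 - 1 / 3) * 1 := by norm_num
      _ ≤ _ := by
        push_cast
        refine mul_le_mul ?_ ?_ ?_ ?_ <;> linarith
  · calc c * (1 + x * (1 / 2)) ≤ 1471 / 2000 * (1 - t) * (1 + x * (1 / 2)) := by gcongr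
      _ = 1471 / 2000 * (1 + x * (1 / 2)) * (1 - t) := by ring
      _ ≤ _ := by
        push_cast
        refine mul_le_mul ?_ ?_ ?_ ?_ <;> linarith
  · calc (1 / 4 : ℝ) ≤ 1 * (1 / 2) := by norm_num
      _ ≤ _ := by
        push_cast
        refine mul_le_mul ?_ ?_ ?_ ?_ <;> linarith

lemma PastAfterThree.mul_one_sub_mul_le_sub (h : PastAfterThree x D) (hF : FutureWedge τ t y e)
    (hv : LowVertexInequalities τ t c) :
    c * (1 - x * y) ≤ (1 - (x - D)) * (1 - (y - e)) := by
  have hlo := le_θ₁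
  have hhi := θ₁_le
  obtain ⟨hc0, hc1, -, hτ1, -, -, hsub⟩ := hv
  have hK := h.sub_le_div
  have hx0 := h.nonneg
  have hτ0 : 0 ≤ τ := by linarith [hF.le, hF.sub_le]
  have hcorner := mul_one_sub_mul_le_of_corner (p := (29 + 2 * θ₁) / 39 - (x - D))
    (q := τ - (y - e)) (x := x) (y := y) (μ := (5 + θ₁) / 2) hc0 (by linarith) zero_le_one
    (by linarith) (by linarith [hF.sub_le]) hx0
    (by linear_combination (5 + θ₁) / 18 * h.neg_le_mul + (20 / 234 - x / 9) * θ₁_sq)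
    (by linarith [hF.nonneg]) (by linarith [hF.le]) hsub
    (by
      calc c * ((5 + θ₁) / 2) * τ ≤ 1 / 5 * ((5 + θ₁) / 2) * (1 / 2) := by gcongr
        _ ≤ 1 - τ := by linarith)
    (by
      calc c * 1 * ((5 - θ₁) / 13) ≤ 1 / 5 * 1 * ((5 - θ₁) / 13) := by gcongr; linarith
        _ ≤ 1 - (29 + 2 * θ₁) / 39 := by linarith)
  linear_combination hcorner

lemma PastAfterThree.mul_one_sub_mul_le_add (h : PastAfterThree x D) (hF : FutureWedge τ t y e)
    (hv : LowVertexInequalities τ t c) :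
    c * (1 - x * y) ≤ (1 - (x + D)) * (1 - (y + e)) := by
  have hlo := le_θ₁
  have hhi := θ₁_le
  obtain ⟨hc0, hc1, -, -, hct, hadd, -⟩ := hv
  obtain ⟨h0, -, -, h3, -, h5, -, -⟩ := h
  obtain ⟨he0, he1, -, hf2⟩ := hF
  have hθ : 0 ≤ 1 - θ₁ := by linarith
  have hcorner := mul_one_sub_mul_le_of_corner (p := 1 / 3 - (x + D)) (q := t - (y + e))
    (x := x) (y := y) (μ := 1 - θ₁) hc0 (by linarith) one_half_pos.le
    (by linarith) (by linarith) h0 (by linear_combination (1 - θ₁) / 3 * h3 - x / 3 * θ₁_sq)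
    (by linarith) (by linarith) hadd
    (by
      calc c * (1 - θ₁) * (t / 2) ≤ 1471 / 2000 * (1 - t) * 1 * 1 := by gcongr <;> linarith
        _ ≤ 1 - t := by linarith)
    (by
      calc c * (1 / 2) * ((1 - θ₁) / 3) ≤ 1 / 5 * (1 / 2) * ((1 - θ₁) / 3) := by gcongr
        _ ≤ 1 - 1 / 3 := by linarith)
  linear_combination hcorner

lemma PastAfterThree.vertexBound_neg_one (h : PastAfterThree x D) (hF : FutureWedge τ t y e)
    (hv : LowVertexInequalities τ t c) : VertexBound c x D y e (-1) := by
  have hhi := θ₁_le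
  have hsub := h.mul_one_sub_mul_le_sub hF hv
  have hadd := h.mul_one_sub_mul_le_add hF hv
  obtain ⟨hc0, hc1, -, -, -, -, -⟩ := hv
  obtain ⟨h0, -, -, h3, h4, h5, -, -⟩ := h
  obtain ⟨he0, he1, -, -⟩ := hF
  have hD : D ≤ x := by linarith [mul_le_mul_of_nonneg_right hhi h0]
  have hcxy : c * (1 + ((-1 : ℤ) : ℝ) * x * y) ≤ c := by
    refine mul_le_of_le_one_right hc0 ?_
    push_cast
    linarith [mul_nonneg h0 (he0.trans he1)]
  refine ⟨?_, ?_, hcxy.trans ?_, hcxy.trans ?_⟩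
  · push_cast
    linear_combination hsub
  · push_cast
    linear_combination hadd
  · calc c ≤ 1 / 2 * 1 := by linarith
      _ ≤ _ := by
        push_cast
        refine mul_le_mul ?_ ?_ ?_ ?_ <;> linarith
  · calc c ≤ 1 * 1 := by linarith
      _ ≤ _ := by
        push_cast
        refine mul_le_mul ?_ ?_ ?_ ?_ <;> linarith

lemma PastAfterThree.vertexBound {ε : ℤ} (h : PastAfterThree x D) (hε : |ε| = 1)
    (hF : FutureWedge τ t y e) (hy : y < 1 / 2) (hv : LowVertexInequalities τ t c) :
    VertexBound c x D y e ε := by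
  rcases (abs_eq zero_le_one).1 hε with rfl | rfl
  · exact h.vertexBound_one hF hy hv
  · exact h.vertexBound_neg_one hF hv

lemma PastAfterTwo.vertexBound (h : PastAfterTwo x D) (hF : FutureWedge τ (4 / 5) y e)
    (hy : y < 1 / 2) (hc1 : c ≤ 1471 / 10000) (hc : c * (13 + 2 * θ₁) ≤ 2) :
    VertexBound c x D y e 1 := by
  have hlo := le_θ₁
  have hhi := θ₁_le
  have hD := _root_.abs_le.1 h.abs_le
  obtain ⟨h0, h1, h2, -, h4, h5⟩ := h
  obtain ⟨he0, he1, -, hf2⟩ := hF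
  have hy0 : 0 ≤ y := he0.trans he1
  have hx0 : 0 ≤ x := by linarith
  have hθx := mul_le_mul_of_nonneg_right hhi hx0
  have hxy' : x * y ≤ y := mul_le_of_le_one_left hy0 (by linarith)
  have hxy0 : 0 ≤ x * y := mul_nonneg hx0 hy0
  have hcD : c ≤ 1 - x + D := by
    refine le_of_mul_le_mul_right ?_ (by linarith : 0 < 13 + 2 * θ₁)
    linarith
  have hcxy : c * (1 + ((1 : ℤ) : ℝ) * x * y) ≤ 1 / 5 := by
    calc c * (1 + ((1 : ℤ) : ℝ) * x * y) = c * (1 + x * y) := by push_cast; ring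
      _ ≤ 1471 / 10000 * (1 + 5 / 8 * (1 / 2)) := by gcongr
      _ ≤ 1 / 5 := by norm_num
  refine ⟨?_, hcxy.trans ?_, hcxy.trans ?_, hcxy.trans ?_⟩
  · push_cast
    rw [one_mul]
    refine mul_le_mul hcD ?_ ?_ ?_ <;> linarith
  · calc (1 / 5 : ℝ) ≤ 7 / 25 * 1 := by norm_num
      _ ≤ _ := by
        push_cast
        refine mul_le_mul ?_ ?_ ?_ ?_ <;> linarith
  · calc (1 / 5 : ℝ) ≤ 6 / 5 * (1 / 5) := by norm_num
      _ ≤ _ := by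
        push_cast
        refine mul_le_mul ?_ ?_ ?_ ?_ <;> linarith
  · calc (1 / 5 : ℝ) ≤ 1 * (1 / 2) := by norm_num
      _ ≤ _ := by
        push_cast
        refine mul_le_mul ?_ ?_ ?_ ?_ <;> linarith

end LowVertex

lemma LowPast.nonvertexBound {c x D y e τ t ξ ζ δ δ' : ℝ} {ε a : ℤ} (h : LowPast x D ε)
    (hF : FutureWedge τ t y e) (hy : y < 1 / 2) (ht : t ≤ 4 / 5) (hc : c ≤ 1 / 5) (ha : 2 ≤ a)
    (hξ : |ξ| = x) (hζ : |ζ| = y) (hδ : |δ| = |D|) (hδ' : |δ'| = |e|) :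
    NonvertexBound c a ξ ζ δ δ' := by
  have he : |e| ≤ 4 / 10 := by
    rw [abs_of_nonneg hF.nonneg]
    linarith [hF.le, hF.add_le]
  obtain ⟨hx, hD, h₁, h₃⟩ : x ≤ 5 / 8 ∧ |D| ≤ 45 / 100 ∧ x + |D| ≤ 1 ∧ 3 * x + |D| ≤ 22 / 10 := by
    rcases h with h | ⟨h, -⟩ <;>
      exact ⟨by linarith [h.le], by linarith [h.abs_le], by linarith [h.abs_le, h.le],
        by linarith [h.abs_le, h.le]⟩
  rw [← hξ] at hx h₁ h₃
  rw [← hδ] at hD h₁ h₃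
  exact nonvertexBound_of_le_one_fifth hc ha hx (by linarith) hD (by linarith) h₁ h₃

namespace SignedExpansion

variable {C : SignedExpansion}

lemma futureWedge_two (k : ℕ) : FutureWedge (1 / 2) (4 / 5) (C.t k) (C.e k) := by
  refine mem_futureRegion (isClosed_setOf_futureWedge _ _) (fun k => ⟨2 / 5 * C.t k, ?_, ?_⟩)
    (fun k e he => ?_) k
  · rw [abs_of_nonneg (by linarith [C.t_pos k])]
    linarith [C.t_lt_half k]
  · constructor <;> linarith [C.t_pos k, C.t_lt_half k]
  · have ht := C.t_pos k
    have ht' := C.t_lt_half k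
    rcases (C.two_le_a k).eq_or_lt with h2 | h3
    · have he2 : e ≤ 2 / 5 := by linarith [he.le, he.add_le]
      have hte := mul_le_mul_of_nonneg_left he2 ht.le
      have hte0 := mul_nonneg ht.le he.nonneg
      rw [← h2, futureSumStep, if_neg (by decide)]
      constructor <;> linarith
    · have hw : IsInvariantWedge 3 4 (1 / 2) (4 / 5) := by constructor <;> norm_num
      exact he.step hw ht (C.t_pos (k + 1)) (C.t_lt_half (k + 1)) (t_mul_a_sub_le k)
        (fun _ => by exact_mod_cast h3)
        (fun hodd => by exact_mod_cast four_le_of_three_le_of_not_odd h3 hodd)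

lemma abs_e_lt_half (k : ℕ) : |C.e k| < 1 / 2 := by
  have h := futureWedge_two (C := C) k
  rw [abs_of_nonneg h.nonneg]
  linarith [h.le, h.add_le]

theorem oddFormBound_two : C.OddFormBound 0 (2 / (Real.sqrt 13 + 10)) := by
  have hlo := le_θ₁
  have hhi := θ₁_le
  have hc : 2 / (Real.sqrt 13 + 10) = (14 - 4 * θ₁) / 87 := by
    have hden : Real.sqrt 13 + 10 = 13 + 2 * θ₁ := by unfold θ₁; ring
    rw [hden, div_eq_div_iff (by linarith) (by norm_num)]
    linear_combination 8 * θ₁_sq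
  rw [hc]
  have hv : LowVertexInequalities (1 / 2) (4 / 5) ((14 - 4 * θ₁) / 87) := by
    constructor
    case add_corner => linear_combination -8 / 1305 * θ₁_sq
    case sub_corner => linear_combination -2 / 1131 * θ₁_sq
    all_goals linarith
  refine oddFormBound_of_regions isPastRegion_lowPast C.two_le_a futureWedge_two
    (fun {x D y e ε} hε hQ _ hy _ hF => ?_) (fun hQ hy _ hF ha hξ hζ hδ hδ' =>
      hQ.nonvertexBound hF hy hv.t_le hv.c_le ha hξ hζ hδ hδ')
  rcases hQ with h | ⟨h, rfl⟩
  · exact h.vertexBound hε hF hy hv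
  · exact h.vertexBound hF hy (by linarith) (by linear_combination -8 / 87 * θ₁_sq)

end SignedExpansion

/-- Four times the lower bound for `M(α, γ_*)` when `R = 3`. -/
noncomputable def boundThree : ℝ :=
  (1 - 2 / (1 + Real.sqrt 3)) * (1 - 1 / 4 * (1 + θ₁ ^ 2 / (1 - θ₁))) /
    (1 + 1 / 4 * (θ₁ - 1 / (1 + Real.sqrt 3)))

lemma boundThree_mul :
    boundThree * (1 - (1 - θ₁) / 3 * ((Real.sqrt 3 - 1) / 2)) = 2 / 3 * (2 - Real.sqrt 3) := by
  have hlo := le_θ₁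
  have hhi := θ₁_le
  have hs : Real.sqrt 3 ^ 2 = 3 := Real.sq_sqrt (by norm_num)
  have hs2 : Real.sqrt 3 ≤ 2 := Real.sqrt_le_iff.2 ⟨by norm_num, by norm_num⟩
  have hinv : 1 / (1 + Real.sqrt 3) = (Real.sqrt 3 - 1) / 2 := by
    rw [div_eq_div_iff (by positivity) (by norm_num)]
    linear_combination -hs
  have hinv' : 2 / (1 + Real.sqrt 3) = Real.sqrt 3 - 1 := by
    rw [div_eq_mul_one_div, hinv]
    ring
  have hθ : θ₁ ^ 2 / (1 - θ₁) = (1 - 2 * θ₁) / 3 := by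
    rw [div_eq_div_iff (by linarith) (by norm_num)]
    linear_combination θ₁_sq
  have hden : 1 + 1 / 4 * (θ₁ - (Real.sqrt 3 - 1) / 2) ≠ 0 := by linarith
  rw [boundThree, hinv, hinv', hθ, div_mul_eq_mul_div, div_eq_iff hden]
  linear_combination (2 - Real.sqrt 3) * (Real.sqrt 3 - 1) / 36 * θ₁_sq

lemma lowVertexInequalities_boundThree :
    LowVertexInequalities (2 - Real.sqrt 3) (Real.sqrt 3 - 1) boundThree := by
  have hlo := le_θ₁
  have hmul := boundThree_mul
  have hs : Real.sqrt 3 ^ 2 = 3 := Real.sq_sqrt (by norm_num)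
  have hs0 : 17320 / 10000 ≤ Real.sqrt 3 := Real.le_sqrt_of_sq_le (by norm_num)
  have hs1 : Real.sqrt 3 ≤ 17321 / 10000 := Real.sqrt_le_iff.2 ⟨by norm_num, by norm_num⟩
  generalize boundThree = c at *
  generalize Real.sqrt 3 = s at *
  have hden : 914 / 1000 ≤ 1 - (1 - θ₁) / 3 * ((s - 1) / 2) := by
    have : (1 - θ₁) / 3 * ((s - 1) / 2) ≤ 6973 / 10000 / 3 * (7321 / 10000 / 2) := by
      gcongr <;> linarith
    linarith
  have hc0 : 0 ≤ c := nonneg_of_mul_nonneg_left (by linarith)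
    (by linarith : 0 < 1 - (1 - θ₁) / 3 * ((s - 1) / 2))
  have hc1 : c ≤ 1956 / 10000 := by linarith [mul_le_mul_of_nonneg_left hden hc0]
  have hsub : c * (1 - (5 - θ₁) / 13 * (2 - s)) = (1 - (29 + 2 * θ₁) / 39) * (1 - (2 - s)) := by
    refine mul_right_cancel₀ (by linarith : 1 - (1 - θ₁) / 3 * ((s - 1) / 2) ≠ 0) ?_
    rw [mul_right_comm, hmul]
    have := θ₁_sq
    grind
  constructor <;> linarith

theorem SignedExpansion.oddFormBound_three {C : SignedExpansion} (hR : ∀ k, 3 ≤ C.a k) :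
    C.OddFormBound 0 boundThree := by
  have hs : Real.sqrt 3 ^ 2 = 3 := Real.sq_sqrt (by norm_num)
  have hs0 : 17320 / 10000 ≤ Real.sqrt 3 := Real.le_sqrt_of_sq_le (by norm_num)
  have hs1 : Real.sqrt 3 ≤ 17321 / 10000 := Real.sqrt_le_iff.2 ⟨by norm_num, by norm_num⟩
  have hw : IsInvariantWedge 3 4 (2 - Real.sqrt 3) (Real.sqrt 3 - 1) := by
    constructor <;> linarith
  have hv := lowVertexInequalities_boundThree
  have ht (k : ℕ) : C.t k ≤ 2 / 5 := by
    have := t_mul_le hR k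
    push_cast at this
    linarith
  have hF := mem_futureWedge (C := C) hw (fun k _ => by exact_mod_cast hR k)
    (fun k hodd => by exact_mod_cast four_le_of_three_le_of_not_odd (hR k) hodd)
    (fun k => by linarith [ht k]) (fun k => by linarith [ht k])
  exact oddFormBound_of_regions isPastRegion_pastAfterThree hR hF
    (fun hε hQ _ hy _ hF => hQ.vertexBound hε hF hy hv)
    fun {x D y e ξ ζ δ δ' ε a} hQ hy _ hF ha hξ hζ hδ hδe =>
      LowPast.nonvertexBound (ε := ε) (.inl hQ) hF hy hv.t_le hv.c_le (by linarith) hξ hζ hδ hδe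

/-! ### The nearest integer continued fraction -/

section nicf

lemma abs_nicfE_succ (α : ℝ) (k : ℕ) : |nicfE α (k + 1)| = 1 := by
  cases k with
  | zero => rfl
  | succ k => simp only [nicfE]; split_ifs <;> rfl

lemma oddIdx_succ (α : ℝ) (k : ℕ) :
    oddIdx α (k + 1) = oddIdx α k + if Odd (nicfA α (k + 1)) then 1 else 0 := by
  unfold oddIdx
  rw [← insert_Icc_right_eq_Icc_add_one (by omega), filter_insert]
  split_ifs
  · exact card_insert_of_notMem (by simp)
  · rfl

lemma lamStar_succ (α : ℝ) (k : ℕ) :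
    lamStar α (k + 1) = if Odd (nicfA α (k + 1)) then -(-1) ^ oddIdx α k else 0 := by
  unfold lamStar
  split_ifs with h
  · rw [oddIdx_succ, if_pos h, pow_succ, mul_neg_one]
  · rfl

lemma abs_lamStar_le_one (α : ℝ) (i : ℕ) : |(lamStar α i : ℝ)| ≤ 1 := by
  unfold lamStar
  split_ifs <;> simp

lemma nicfD_succ (α : ℝ) (n : ℕ) : nicfD α (n + 1) = nicfD α n * nicfT α n :=
  prod_range_succ _ _

lemma hasSum_half_div_two_pow : HasSum (fun k : ℕ => (1 / 2 : ℝ) / 2 ^ k) 1 := by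
  simpa only [div_div] using hasSum_geometric_two' (1 : ℝ)

lemma eventually_lt_abs_intCast (B : ℝ) : ∀ᶠ n : ℤ in cofinite, B < |(n : ℝ)| := by
  have htendsto := tendsto_norm_cocompact_atTop (E := ℤ)
  rw [cocompact_eq_cofinite] at htendsto
  exact (htendsto.congr Int.norm_eq_abs).eventually_gt_atTop B

lemma quarter_sub_le_mul {c η u v w : ℝ} (hη : 0 < η) (hu : 0 ≤ u) (hv : |c| / η < v)
    (hw : w ≤ 2 * v + 1) (h : c - η ≤ w * (2 * u)) : c / 4 - η ≤ v * u := by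
  rw [div_lt_iff₀ hη] at hv
  have hc := le_abs_self c
  have hv0 : 0 < v := pos_of_mul_pos_left ((abs_nonneg c).trans_lt hv) hη.le
  by_cases hsmall : 2 * u ≤ 3 * η
  · nlinarith
  · nlinarith [abs_nonneg c]

lemma irrational_fract {x : ℝ} (hx : Irrational x) : Irrational (Int.fract x) :=
  hx.sub_intCast _

variable {α : ℝ} (hirr : Irrational α) (h0 : 0 < α) (h12 : α < 1 / 2)

include hirr in
lemma irrational_nicfT (k : ℕ) : Irrational (nicfT α k) := by
  induction k with
  | zero => exact hirr
  | succ k ih =>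
    have hfract := irrational_fract ih.inv
    simp only [nicfT]
    split_ifs
    · exact hfract
    · simpa using hfract.ratCast_sub 1

include hirr in
lemma fract_inv_nicfT_pos (k : ℕ) : 0 < Int.fract (nicfT α k)⁻¹ :=
  (Int.fract_nonneg _).lt_of_ne' (irrational_fract (irrational_nicfT hirr k).inv).ne_zero

include hirr h0 in
lemma nicfT_pos (k : ℕ) : 0 < nicfT α k := by
  cases k with
  | zero => exact h0
  | succ k =>
    simp only [nicfT]
    split_ifs
    · exact fract_inv_nicfT_pos hirr k
    · exact sub_pos.2 (Int.fract_lt_one _)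

include hirr h12 in
lemma nicfT_lt_half (k : ℕ) : nicfT α k < 1 / 2 := by
  cases k with
  | zero => exact h12
  | succ k =>
    have hne : nicfT α (k + 1) ≠ 1 / 2 := by
      simpa using (irrational_nicfT hirr (k + 1)).ne_rat (1 / 2)
    refine lt_of_le_of_ne ?_ hne
    simp only [nicfT]
    split_ifs with h
    · exact h
    · linarith

include hirr h0 in
lemma nicfT_mul_nicfA_add (k : ℕ) :
    nicfT α k * (nicfA α (k + 1) + nicfE α (k + 1 + 1) * nicfT α (k + 1)) = 1 := by
  have hinv : (nicfA α (k + 1) : ℝ) + nicfE α (k + 1 + 1) * nicfT α (k + 1) = (nicfT α k)⁻¹ := by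
    simp only [nicfT, nicfA, nicfE]
    split_ifs
    · rw [Int.cast_one, one_mul, Int.floor_add_fract]
    · rw [Int.ceil_eq_add_one_sub_fract (fract_inv_nicfT_pos hirr k).ne']
      push_cast
      ring
  rw [hinv, mul_inv_cancel₀ (nicfT_pos hirr h0 k).ne']

include hirr h0 h12 in
lemma two_lt_inv_nicfT (k : ℕ) : 2 < (nicfT α k)⁻¹ := by
  rw [lt_inv_comm₀ two_pos (nicfT_pos hirr h0 k), ← one_div]
  exact nicfT_lt_half hirr h12 k

include hirr h0 h12 in
lemma two_le_nicfA_succ (k : ℕ) : 2 ≤ nicfA α (k + 1) := by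
  have hinv := two_lt_inv_nicfT hirr h0 h12 k
  simp only [nicfA]
  split_ifs
  · exact Int.le_floor.2 (by exact_mod_cast hinv.le)
  · exact (Int.lt_ceil.2 (by exact_mod_cast hinv)).le

include hirr h0 h12 in
lemma nicfE_of_nicfA_eq_two {k : ℕ} (hk : nicfA α (k + 1) = 2) : nicfE α (k + 1 + 1) = 1 := by
  have hinv := two_lt_inv_nicfT hirr h0 h12 k
  simp only [nicfA] at hk
  simp only [nicfE]
  split_ifs at hk ⊢
  · rfl
  · exact absurd hk (Int.lt_ceil.2 (by exact_mod_cast hinv)).ne'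

include hirr h0 in
lemma nicfD_pos (n : ℕ) : 0 < nicfD α n := prod_pos fun j _ => nicfT_pos hirr h0 j

include hirr h0 h12 in
lemma nicfD_add_le (n k : ℕ) : nicfD α (n + k) ≤ nicfD α n * (1 / 2) ^ k := by
  induction k with
  | zero => simp
  | succ k ih =>
    rw [← add_assoc, nicfD_succ, pow_succ, ← mul_assoc]
    have hD := (nicfD_pos hirr h0 (n + k)).le
    exact mul_le_mul ih (nicfT_lt_half hirr h12 _).le (nicfT_pos hirr h0 _).le (hD.trans ih)

include hirr h0 h12 in
lemma summable_nicfD : Summable (nicfD α) :=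
  summable_geometric_two.of_nonneg_of_le (fun k => (nicfD_pos hirr h0 k).le) fun k => by
    simpa [nicfD] using nicfD_add_le hirr h0 h12 0 k

include hirr h0 h12 in
lemma norm_lamStar_mul_nicfD_le (n k : ℕ) :
    ‖(lamStar α (n + 1 + k) : ℝ) * nicfD α (n + 1 + k)‖ ≤ nicfD α n * (1 / 2 / 2 ^ k) := by
  have hpow : ((1 : ℝ) / 2) ^ (1 + k) = 1 / 2 / 2 ^ k := by
    rw [pow_add, pow_one, one_div_pow]
    ring
  have hD := nicfD_pos hirr h0 (n + 1 + k)
  calc ‖(lamStar α (n + 1 + k) : ℝ) * nicfD α (n + 1 + k)‖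
      = |(lamStar α (n + 1 + k) : ℝ)| * nicfD α (n + 1 + k) := by
        rw [Real.norm_eq_abs, abs_mul, abs_of_pos hD]
    _ ≤ nicfD α (n + (1 + k)) := by
        rw [← add_assoc]; exact mul_le_of_le_one_left hD.le (abs_lamStar_le_one α _)
    _ ≤ nicfD α n * (1 / 2 / 2 ^ k) := hpow ▸ nicfD_add_le hirr h0 h12 n (1 + k)

include hirr h0 h12 in
lemma summable_lamStar_mul_nicfD (n : ℕ) :
    Summable fun k => (lamStar α (n + 1 + k) : ℝ) * nicfD α (n + 1 + k) :=
  (hasSum_half_div_two_pow.summable.mul_left _).of_norm_bounded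
    (norm_lamStar_mul_nicfD_le hirr h0 h12 n)

include hirr h0 h12 in
lemma abs_dplus_le_one (n : ℕ) : |dplus α n| ≤ 1 := by
  have hD := nicfD_pos hirr h0 n
  unfold dplus
  rw [abs_div, abs_of_pos hD, div_le_one hD]
  simpa only [mul_one, Real.norm_eq_abs] using
    tsum_of_norm_bounded (hasSum_half_div_two_pow.mul_left (nicfD α n))
      (norm_lamStar_mul_nicfD_le hirr h0 h12 n)

include hirr h0 h12 in
lemma dplus_eq_nicfT_mul (n : ℕ) :
    dplus α n = nicfT α n * (lamStar α (n + 1) + dplus α (n + 1)) := by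
  have hD := (nicfD_pos hirr h0 n).ne'
  have hT := (nicfT_pos hirr h0 n).ne'
  have hshift (k : ℕ) : n + 1 + (k + 1) = n + 1 + 1 + k := by ring
  unfold dplus
  rw [(summable_lamStar_mul_nicfD hirr h0 h12 n).tsum_eq_zero_add]
  rw [tsum_congr fun k => by rw [hshift], add_zero, nicfD_succ]
  field_simp

/-- The nearest integer continued fraction of `α` with the digits of `γ_*`; the first partial
quotient, indexed by `1` in `nicfA`, has index `0` here. -/
noncomputable def nicfExpansion : SignedExpansion where
  a k := nicfA α (k + 1)
  ε k := nicfE α (k + 1)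
  t := nicfT α
  e k := -((-1) ^ oddIdx α k * dplus α k)
  two_le_a := two_le_nicfA_succ hirr h0 h12
  abs_ε := abs_nicfE_succ α
  ε_succ_of_a_eq_two _ := nicfE_of_nicfA_eq_two hirr h0 h12
  t_pos := nicfT_pos hirr h0
  t_lt_half := nicfT_lt_half hirr h12
  t_mul := nicfT_mul_nicfA_add hirr h0
  e_eq k := by
    have hsq : ((-1 : ℝ) ^ oddIdx α k) ^ 2 = 1 := by rw [← pow_mul', pow_mul, neg_one_sq, one_pow]
    rw [dplus_eq_nicfT_mul hirr h0 h12, futureSumStep, lamStar_succ, oddIdx_succ]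
    split_ifs
    · push_cast
      linear_combination nicfT α k * hsq
    · push_cast
      ring
  abs_e_le_one k := by
    simpa [abs_mul] using abs_dplus_le_one hirr h0 h12 k

lemma form_zero_nicfExpansion (z : ℤ × ℤ) :
    (nicfExpansion hirr h0 h12).form 0 z = z.2 + α * z.1 - dplus α 0 := by
  simp [SignedExpansion.form, nicfExpansion, nicfE, nicfT, oddIdx, sub_eq_add_neg]

include hirr h0 h12 in
lemma two_mul_gammaStar : 2 * gammaStar α = 1 + α + dplus α 0 := by
  -- Since `α_k (a_{k+1} + ε_{k+2} α_{k+1}) = 1`, the part of the series without `λ` telescopes.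
  set f : ℕ → ℝ := fun k => nicfD α k + nicfE α (k + 1) * nicfD α (k + 1) with hf
  have hD := summable_nicfD hirr h0 h12
  have hfsum : Summable f := by
    refine hD.add (((summable_nat_add_iff 1).2 hD).of_norm_bounded fun k => le_of_eq ?_)
    rw [norm_mul, Real.norm_eq_abs, Real.norm_eq_abs, abs_of_pos (nicfD_pos hirr h0 _),
      abs_intCast_eq_one (abs_nicfE_succ α k), one_mul]
  have hfsum' : Summable fun k => f (k + 1) := (summable_nat_add_iff 1).2 hfsum
  have hterm (k : ℕ) :
      ((nicfA α (k + 1) : ℝ) - 1 + nicfE α (k + 1) + lamStar α (k + 1)) / 2 * nicfD α (k + 1) =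
        1 / 2 * (f k - f (k + 1) + lamStar α (0 + 1 + k) * nicfD α (0 + 1 + k)) := by
    simp only [hf, zero_add, add_comm 1 k, nicfD_succ α (k + 1), nicfD_succ α k]
    linear_combination 1 / 2 * nicfD α k * nicfT_mul_nicfA_add hirr h0 k
  have hf0 : f 0 = 1 + α := by simp [hf, nicfD, nicfE, nicfT]
  have hD0 : nicfD α 0 = 1 := prod_range_zero _
  unfold gammaStar dplus
  rw [tsum_congr hterm, tsum_mul_left,
    (hfsum.sub hfsum').tsum_add (summable_lamStar_mul_nicfD hirr h0 h12 0),
    hfsum.tsum_sub hfsum', hfsum.tsum_eq_zero_add, hf0, hD0, div_one]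
  ring

lemma form_zero_two_mul_sub_one (n m : ℤ) :
    (nicfExpansion hirr h0 h12).form 0 (2 * n - 1, -(2 * m + 1)) =
      2 * (n * α - gammaStar α - m) := by
  rw [form_zero_nicfExpansion]
  push_cast
  linear_combination two_mul_gammaStar hirr h0 h12

include hirr h0 h12 in
lemma gammaStar_ne_intCast_add :
    ¬∃ p q : ℤ, gammaStar α = (p : ℝ) + (q : ℝ) * α := by
  rintro ⟨p, q, hpq⟩
  refine SignedExpansion.form_zero_ne_zero (nicfExpansion hirr h0 h12)
    (fun _ => SignedExpansion.abs_e_lt_half _) (z := (2 * q - 1, -(2 * -p + 1)))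
    ⟨q - 1, by ring⟩ (odd_two_mul_add_one _).neg ?_
  rw [form_zero_two_mul_sub_one, hpq]
  push_cast
  ring

lemma SignedExpansion.OddFormBound.quarter_le_Mval {c : ℝ}
    (h : (nicfExpansion hirr h0 h12).OddFormBound 0 c) : c / 4 ≤ Mval α (gammaStar α) := by
  refine le_Mval hirr fun η hη => ?_
  obtain ⟨B, hB⟩ := h η hη
  filter_upwards [eventually_lt_abs_intCast (max (B + 1) (max 1 (|c| / η)))] with n hn
  obtain ⟨hnB, hn1, hnη⟩ : B + 1 < |(n : ℝ)| ∧ 1 < |(n : ℝ)| ∧ |c| / η < |(n : ℝ)| := by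
    simpa only [max_lt_iff] using hn
  set m := round (n * α - gammaStar α)
  have hform : |(nicfExpansion hirr h0 h12).form 0 (2 * n - 1, -(2 * m + 1))| =
      2 * nint (n * α - gammaStar α) := by
    rw [form_zero_two_mul_sub_one, abs_mul, abs_two, nint]
  have hle : nint (n * α - gammaStar α) ≤ 1 / 2 := abs_sub_round _
  have hupper : |((2 * n - 1 : ℤ) : ℝ)| ≤ 2 * |(n : ℝ)| + 1 := by
    push_cast
    simpa [abs_mul] using abs_sub (2 * (n : ℝ)) 1
  have hlower : 2 * |(n : ℝ)| - 1 ≤ |((2 * n - 1 : ℤ) : ℝ)| := by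
    push_cast
    simpa [abs_mul] using abs_sub_abs_le_abs_sub (2 * (n : ℝ)) 1
  have hbound := hB (2 * n - 1, -(2 * m + 1)) ⟨n - 1, by ring⟩ (odd_two_mul_add_one m).neg
    (by rw [hform]; linarith) (by linarith)
  rw [abs_mul, hform] at hbound
  exact quarter_sub_le_mul hη (nint_nonneg _) hnη hupper hbound

end nicf

/-! ### Lower bounds for `M(α, γ_*)` -/

theorem stmt0_general (α : ℝ) (hirr : Irrational α) (h0 : 0 < α) (h12 : α < 1 / 2)
    (R : ℕ) (hbd : ∀ᶠ i in Filter.atTop, (R : ℤ) ≤ nicfA α i) :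
    rho α ≥ Mval α (gammaStar α) ∧
      (R = 2 → Mval α (gammaStar α) ≥ 1 / (2 * (Real.sqrt 13 + 10))) ∧
      (R = 3 → Mval α (gammaStar α) ≥
        1 / 4 * (1 - 2 / (1 + Real.sqrt 3)) *
          (1 - 1 / 4 * (1 + ((Real.sqrt 13 - 3) / 2) ^ 2 / (1 - (Real.sqrt 13 - 3) / 2))) /
          (1 + 1 / 4 * ((Real.sqrt 13 - 3) / 2 - 1 / (1 + Real.sqrt 3)))) ∧
      (4 ≤ R → Even R →
        Mval α (gammaStar α) ≥ 1 / 4 * (1 - 3 / (R : ℝ) + 4 / (R : ℝ) ^ 2 - 7 / (R : ℝ) ^ 3)) ∧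
      (5 ≤ R → Odd R →
        Mval α (gammaStar α) ≥ 1 / 4 * (1 - 3 / (R : ℝ) + 3 / (R : ℝ) ^ 2 - 6 / (R : ℝ) ^ 3)) := by
  obtain ⟨K, hK⟩ := eventually_atTop.1 hbd
  set C := nicfExpansion hirr h0 h12
  have hR (k : ℕ) : (R : ℤ) ≤ (C.drop K).a k := hK (K + k + 1) (by omega)
  refine ⟨Mval_le_rho hirr (gammaStar_ne_intCast_add hirr h0 h12), fun _ => ?_, ?_,
    fun h4 heven => ?_, fun h5 hodd => ?_⟩
  · convert C.oddFormBound_two.quarter_le_Mval using 1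
    field_simp
    norm_num
  · rintro rfl
    convert (SignedExpansion.oddFormBound_three hR).of_drop.quarter_le_Mval using 1
    unfold boundThree θ₁
    ring
  · convert (SignedExpansion.oddFormBound_even (by exact_mod_cast h4) (by exact_mod_cast heven)
      hR).of_drop.quarter_le_Mval using 1
    push_cast
    ring
  · convert (SignedExpansion.oddFormBound_odd (by exact_mod_cast h5) (by exact_mod_cast hodd)
      hR).of_drop.quarter_le_Mval using 1
    push_cast
    ring

/-- Theorem 1: lower bounds for `M(α,γ_*)` (hence for `ρ(α)`) in terms of
`R = liminf a_i`. -/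
theorem stmt0 (α : ℝ) (hirr : Irrational α) (h0 : 0 < α) (h12 : α < 1 / 2)
    (R : ℕ) (hR2 : 2 ≤ R)
    (hbd : ∀ᶠ i in Filter.atTop, (R : ℤ) ≤ nicfA α i)
    (hfreq : ∃ᶠ i in Filter.atTop, nicfA α i = (R : ℤ)) :
    rho α ≥ Mval α (gammaStar α) ∧
      (R = 2 → Mval α (gammaStar α) ≥ 1 / (2 * (Real.sqrt 13 + 10))) ∧
      (R = 3 → Mval α (gammaStar α) ≥
        1 / 4 * (1 - 2 / (1 + Real.sqrt 3)) *
          (1 - 1 / 4 * (1 + ((Real.sqrt 13 - 3) / 2) ^ 2 / (1 - (Real.sqrt 13 - 3) / 2))) /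
          (1 + 1 / 4 * ((Real.sqrt 13 - 3) / 2 - 1 / (1 + Real.sqrt 3)))) ∧
      (4 ≤ R → Even R →
        Mval α (gammaStar α) ≥ 1 / 4 * (1 - 3 / (R : ℝ) + 4 / (R : ℝ) ^ 2 - 7 / (R : ℝ) ^ 3)) ∧
      (5 ≤ R → Odd R →
        Mval α (gammaStar α) ≥ 1 / 4 * (1 - 3 / (R : ℝ) + 3 / (R : ℝ) ^ 2 - 6 / (R : ℝ) ^ 3)) :=
  stmt0_general α hirr h0 h12 R hbd
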